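/- Let ψ, φ : [0,∞) → [0,∞) be non-decreasing functions with ψ(0) = φ(0) = 0, ψ(t) → ∞ and ψ(t)/√t → 0 as t → ∞, and φ(t)/t → 0 as t → ∞. If φ(t) ≥ ψ(t) for all t, then there exists a time T ≥ T₀(φ) such that for all t ≥ T, the spatial gradient ∇_x u(x,t) does not vanish for any x in (CS(h) + φ(t)Bⁿ) \ (CS(h) + ψ(t)Bⁿ). -/

import Mathlib

open Real Set Filter MeasureTheory Metric Pointwise
open scoped Nat Topology

noncomputable section

variable {n : ℕ}

/-- The Laplacian of `v : ℝⁿ → ℝ` at `x`, as the sum of second partial derivatives. -/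
def lap (v : EuclideanSpace ℝ (Fin n) → ℝ) (x : EuclideanSpace ℝ (Fin n)) : ℝ :=
  ∑ i : Fin n, iteratedDeriv 2 (fun a : ℝ => v (x + a • EuclideanSpace.single i (1 : ℝ))) 0

/-- `CS(φ)`: the convex hull of the support of `φ`. -/
def CS (v : EuclideanSpace ℝ (Fin n) → ℝ) : Set (EuclideanSpace ℝ (Fin n)) :=
  convexHull ℝ (tsupport v)

/-- `d_φ`: the diameter of the support of `φ`. -/
def dsupp (v : EuclideanSpace ℝ (Fin n) → ℝ) : ℝ := Metric.diam (tsupport v)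

/-- `δ(K,L) = sup_{η ∈ L} dist(η, K)`. -/
def deltaCC (K L : Set (EuclideanSpace ℝ (Fin n))) : ℝ :=
  sSup ((fun η => Metric.infDist η K) '' L)

/-- The centroid `m_h = (∫ h(y) y dy)/(∫ h(y) dy)`. -/
def centroid (h : EuclideanSpace ℝ (Fin n) → ℝ) : EuclideanSpace ℝ (Fin n) :=
  (∫ y, h y)⁻¹ • ∫ y, h y • y

/-- `T₀(φ) = min{T ≥ 0 : ∀ t ≥ T, t ≥ φ(t) + max{d_h, δ(CS(h),CS(f)) + d_f}}`, `h = f + g`. -/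
def T0 (f g : EuclideanSpace ℝ (Fin n) → ℝ) (phi : ℝ → ℝ) : ℝ :=
  sInf {T : ℝ | 0 ≤ T ∧ ∀ t ≥ T,
    phi t + max (dsupp (f + g)) (deltaCC (CS (f + g)) (CS f) + dsupp f) ≤ t}

/-- Sobolev `W^{ℓ,∞}`-type norm: sum of sup-norms of the iterated derivatives up to order `ℓ`. -/
def sobNorm (ℓ : ℕ) (v : EuclideanSpace ℝ (Fin n) → ℝ) : ℝ :=
  ∑ i ∈ Finset.range (ℓ + 1), ⨆ x, ‖iteratedFDeriv ℝ i v x‖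

/-- The `L¹` norm. -/
def L1norm (v : EuclideanSpace ℝ (Fin n) → ℝ) : ℝ := ∫ y, |v y|

/-- The sup norm. -/
def LinfNorm (v : EuclideanSpace ℝ (Fin n) → ℝ) : ℝ := ⨆ x, |v x|

/-- `𝒞(v)`: the critical points of `v` lying in the interior of its support. -/
def critSet (v : EuclideanSpace ℝ (Fin n) → ℝ) : Set (EuclideanSpace ℝ (Fin n)) :=
  {x | x ∈ interior (tsupport v) ∧ gradient v x = 0}

/-- Exponential generating function of a real sequence. -/
def expGen (a : ℕ → ℝ) (x : ℝ) : ℝ := ∑' i, a i * (x ^ i / (Nat.factorial i : ℝ))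

lemma expGen_summable {a : ℕ → ℝ} {C : ℝ} (ha : ∀ i, |a i| ≤ C) (x : ℝ) :
    Summable (fun i => a i * (x ^ i / (Nat.factorial i : ℝ))) := by
  refine Summable.of_norm_bounded (g := fun i => C * (|x| ^ i / (Nat.factorial i : ℝ)))
    ((Real.summable_pow_div_factorial |x|).mul_left C) fun i => ?_
  rw [norm_mul, norm_div, norm_pow, Real.norm_eq_abs, Real.norm_eq_abs, Real.norm_natCast]
  exact mul_le_mul_of_nonneg_right (ha i) (by positivity)

lemma hasDerivAt_expGen {a : ℕ → ℝ} {C : ℝ} (ha : ∀ i, |a i| ≤ C) (x : ℝ) :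
    HasDerivAt (expGen a) (expGen (fun i => a (i + 1)) x) x := by
  have hC : 0 ≤ C := (abs_nonneg _).trans (ha 0)
  set R : ℝ := |x| + 1 with hR
  have hRpos : 0 < R := by positivity
  have hu : Summable fun i : ℕ => C * ((i : ℝ) * R ^ (i - 1) / (Nat.factorial i : ℝ)) := by
    refine Summable.mul_left C ?_
    rw [← summable_nat_add_iff 1]
    refine (Real.summable_pow_div_factorial R).congr fun i => ?_
    rw [Nat.factorial_succ, Nat.add_sub_cancel]
    push_cast
    have : (Nat.factorial i : ℝ) ≠ 0 := by positivity
    field_simp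
  have key := hasDerivAt_tsum_of_isPreconnected (𝕜 := ℝ) (F := ℝ)
    (g := fun (i : ℕ) (z : ℝ) => a i * (z ^ i / (Nat.factorial i : ℝ)))
    (g' := fun (i : ℕ) (z : ℝ) => a i * ((i : ℝ) * z ^ (i - 1) / (Nat.factorial i : ℝ)))
    (t := ball (0 : ℝ) R) (y₀ := 0) (y := x) hu isOpen_ball
    (convex_ball (0 : ℝ) R).isPreconnected
    (fun i z _ => ((hasDerivAt_pow i z).div_const _).const_mul _)
    (fun i z hz => ?_) (mem_ball_self hRpos) (expGen_summable ha 0)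
    (by rw [mem_ball_zero_iff, Real.norm_eq_abs]; linarith)
  · refine key.congr_deriv ?_
    have hs : Summable fun i : ℕ => a i * ((i : ℝ) * x ^ (i - 1) / (Nat.factorial i : ℝ)) := by
      rw [← summable_nat_add_iff 1]
      refine (expGen_summable (a := fun i => a (i + 1)) (fun i => ha (i + 1)) x).congr fun i => ?_
      rw [Nat.factorial_succ, Nat.add_sub_cancel]
      push_cast
      have : (Nat.factorial i : ℝ) ≠ 0 := by positivity
      field_simp
    rw [hs.tsum_eq_zero_add, expGen]
    simp only [Nat.cast_zero, zero_mul, zero_div, mul_zero, zero_add]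
    refine tsum_congr fun i => ?_
    rw [Nat.factorial_succ, Nat.add_sub_cancel]
    push_cast
    have : (Nat.factorial i : ℝ) ≠ 0 := by positivity
    field_simp
  · rw [norm_mul, norm_div, norm_mul, norm_pow, Real.norm_natCast, Real.norm_natCast]
    rw [mem_ball_zero_iff] at hz
    refine mul_le_mul (ha i) ?_ (by positivity) hC
    gcongr

/-- Coefficients `1 / Γ(b + i + 1)` of the entire part of the modified Bessel function. -/
def besselCoeff (b : ℝ) (i : ℕ) : ℝ := (Real.Gamma (b + i + 1))⁻¹

lemma inv_Gamma_eq (x : ℝ) : (Real.Gamma x)⁻¹ = x * (Real.Gamma (x + 1))⁻¹ := by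
  rcases eq_or_ne x 0 with rfl | hx
  · simp [Real.Gamma_zero]
  · rw [Real.Gamma_add_one hx, mul_inv, mul_inv_cancel_left₀ hx]

lemma besselCoeff_shift (b : ℝ) : (fun i => besselCoeff b (i + 1)) = besselCoeff (b + 1) := by
  funext i
  simp only [besselCoeff]
  push_cast
  ring_nf

lemma besselCoeff_sub_one (b : ℝ) (i : ℕ) :
    besselCoeff (b - 1) i = (b + i) * besselCoeff b i := by
  have := inv_Gamma_eq (b + i)
  simp only [besselCoeff]
  rw [← this]
  ring_nf

lemma besselCoeff_bounded (b : ℝ) : ∃ C, ∀ i, |besselCoeff b i| ≤ C := by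
  obtain ⟨N, hN⟩ := exists_nat_ge (-b)
  have hstep : ∀ k, |besselCoeff b (N + k)| ≤ |besselCoeff b N| := by
    intro k
    induction k with
    | zero => simp
    | succ k ih =>
      refine le_trans ?_ ih
      have h := inv_Gamma_eq (b + ((N + k : ℕ) : ℝ) + 1)
      have h1 : (1 : ℝ) ≤ b + ((N + k : ℕ) : ℝ) + 1 := by
        push_cast
        have : (0 : ℝ) ≤ k := k.cast_nonneg
        linarith
      have h2 : besselCoeff b (N + k) = (b + ((N + k : ℕ) : ℝ) + 1) * besselCoeff b (N + (k + 1)) := by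
        simp only [besselCoeff]
        rw [h]
        push_cast
        ring_nf
      rw [h2, abs_mul, abs_of_pos (show (0 : ℝ) < b + ((N + k : ℕ) : ℝ) + 1 by linarith)]
      exact le_mul_of_one_le_left (abs_nonneg _) h1
  refine ⟨∑ i ∈ Finset.range (N + 1), |besselCoeff b i|, fun i => ?_⟩
  rcases le_or_gt i N with h | h
  · exact Finset.single_le_sum (f := fun i => |besselCoeff b i|) (fun _ _ => abs_nonneg _)
      (Finset.mem_range.2 (by omega))
  · obtain ⟨k, rfl⟩ := Nat.exists_eq_add_of_lt h
    exact (hstep (k + 1)).trans (Finset.single_le_sum (f := fun i => |besselCoeff b i|)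
      (fun _ _ => abs_nonneg _) (Finset.mem_range.2 (by omega)))

/-- The entire function `∑ (σ/16)^i / (i! Γ(b+i+1))`. -/
def besselE (b σ : ℝ) : ℝ := expGen (besselCoeff b) (σ / 16)

lemma hasDerivAt_besselE (b σ : ℝ) : HasDerivAt (besselE b) (besselE (b + 1) σ / 16) σ := by
  obtain ⟨C, hC⟩ := besselCoeff_bounded b
  have h := (hasDerivAt_expGen hC (σ / 16)).comp σ ((hasDerivAt_id σ).div_const 16)
  rw [besselCoeff_shift] at h
  refine h.congr_deriv ?_
  simp only [besselE]
  ring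

lemma contDiff_besselE (b : ℝ) : ContDiff ℝ (⊤ : ℕ∞) (besselE b) := by
  rw [contDiff_infty]
  intro k
  induction k generalizing b with
  | zero =>
    exact contDiff_zero.2
      (continuous_iff_continuousAt.2 fun σ => (hasDerivAt_besselE b σ).continuousAt)
  | succ k ih =>
    push_cast
    rw [contDiff_succ_iff_deriv]
    refine ⟨fun σ => (hasDerivAt_besselE b σ).differentiableAt, by simp, ?_⟩
    have : deriv (besselE b) = fun σ => besselE (b + 1) σ / 16 :=
      funext fun σ => (hasDerivAt_besselE b σ).deriv
    rw [this]
    exact (ih (b + 1)).div_const 16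

lemma besselE_sub_one (b σ : ℝ) :
    besselE (b - 1) σ = b * besselE b σ + σ * besselE (b + 1) σ / 16 := by
  obtain ⟨C, hC⟩ := besselCoeff_bounded b
  obtain ⟨C', hC'⟩ := besselCoeff_bounded (b + 1)
  have h1 := expGen_summable hC (σ / 16)
  have h2 := expGen_summable hC' (σ / 16)
  have h3 : Summable fun i : ℕ => (i : ℝ) * (besselCoeff b i *
      ((σ / 16) ^ i / (Nat.factorial i : ℝ))) := by
    rw [← summable_nat_add_iff 1]
    refine (h2.mul_left (σ / 16)).congr fun i => ?_
    rw [← besselCoeff_shift, Nat.factorial_succ]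
    push_cast
    have : (Nat.factorial i : ℝ) ≠ 0 := by positivity
    field_simp
    ring
  have h4 : σ * besselE (b + 1) σ / 16 = ∑' i : ℕ, (i : ℝ) * (besselCoeff b i *
      ((σ / 16) ^ i / (Nat.factorial i : ℝ))) := by
    rw [h3.tsum_eq_zero_add, besselE, expGen, mul_div_right_comm, ← tsum_mul_left]
    simp only [Nat.cast_zero, zero_mul, zero_add]
    refine tsum_congr fun i => ?_
    rw [← besselCoeff_shift, Nat.factorial_succ]
    push_cast
    have : (Nat.factorial i : ℝ) ≠ 0 := by positivity
    field_simp
    ring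
  rw [h4, besselE, expGen, besselE, expGen, ← tsum_mul_left, ← (h1.mul_left b).tsum_add h3]
  refine tsum_congr fun i => ?_
  rw [besselCoeff_sub_one]
  ring

lemma besselE_pos {b σ : ℝ} (hb : 0 ≤ b) (hσ : 0 ≤ σ) : 0 < besselE b σ := by
  obtain ⟨C, hC⟩ := besselCoeff_bounded b
  have hcoeff : ∀ i, 0 < besselCoeff b i := fun i =>
    inv_pos.2 (Real.Gamma_pos_of_pos (by positivity))
  refine (expGen_summable hC (σ / 16)).tsum_pos (fun i => ?_) 0 ?_
  · exact mul_nonneg (hcoeff i).le (by positivity)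
  · simpa using hcoeff 0

/-- The kernel profile `σ₊ ^ b · ∑ (σ/16)^i / (i! Γ(b+i+1))`. -/
def kernelPhi (b σ : ℝ) : ℝ := (max σ 0) ^ b * besselE b σ

lemma kernelPhi_of_pos {b σ : ℝ} (hσ : 0 < σ) : kernelPhi b σ = σ ^ b * besselE b σ := by
  rw [kernelPhi, max_eq_left hσ.le]

lemma kernelPhi_of_nonpos {b σ : ℝ} (hb : b ≠ 0) (hσ : σ ≤ 0) : kernelPhi b σ = 0 := by
  rw [kernelPhi, max_eq_right hσ, Real.zero_rpow hb, zero_mul]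

lemma continuous_kernelPhi {b : ℝ} (hb : 0 ≤ b) : Continuous (kernelPhi b) := by
  refine Continuous.mul ?_ (contDiff_besselE b).continuous
  exact (continuous_id.max continuous_const).rpow_const fun _ => Or.inr hb

lemma kernelPhi_pos {b σ : ℝ} (hb : 0 ≤ b) (hσ : 0 < σ) : 0 < kernelPhi b σ := by
  rw [kernelPhi_of_pos hσ]
  exact mul_pos (Real.rpow_pos_of_pos hσ _) (besselE_pos hb hσ.le)

lemma mul_kernelPhi_sub_one {b σ : ℝ} (hσ : 0 < σ) :
    σ * kernelPhi (b - 1) σ = b * kernelPhi b σ + kernelPhi (b + 1) σ / 16 := by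
  rw [kernelPhi_of_pos hσ, kernelPhi_of_pos hσ, kernelPhi_of_pos hσ, besselE_sub_one,
    Real.rpow_sub_one hσ.ne', Real.rpow_add_one hσ.ne']
  field_simp

lemma hasDerivAt_kernelPhi_of_pos {b σ : ℝ} (hσ : 0 < σ) :
    HasDerivAt (kernelPhi b) (kernelPhi (b - 1) σ) σ := by
  have h := (Real.hasDerivAt_rpow_const (x := σ) (p := b) (Or.inl hσ.ne')).mul
    (hasDerivAt_besselE b σ)
  have h' : HasDerivAt (kernelPhi b) _ σ := h.congr_of_eventuallyEq <| by
    filter_upwards [Ioi_mem_nhds hσ] with y hy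
    exact kernelPhi_of_pos hy
  refine h'.congr_deriv ?_
  rw [kernelPhi_of_pos hσ, besselE_sub_one, Real.rpow_sub_one hσ.ne']
  field_simp

lemma continuousAt_kernelPhi_of_pos {b σ : ℝ} (hσ : 0 < σ) : ContinuousAt (kernelPhi b) σ :=
  (hasDerivAt_kernelPhi_of_pos hσ).continuousAt

lemma hasDerivAt_kernelPhi {b : ℝ} (hb : 1 < b) (σ : ℝ) :
    HasDerivAt (kernelPhi b) (kernelPhi (b - 1) σ) σ := by
  refine hasDerivAt_of_hasDerivAt_of_ne' (x := (0 : ℝ)) (f := kernelPhi b)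
    (g := kernelPhi (b - 1)) (fun y hy => ?_) (continuous_kernelPhi (by linarith)).continuousAt
    (continuous_kernelPhi (by linarith)).continuousAt σ
  rcases lt_or_gt_of_ne hy with h | h
  · rw [kernelPhi_of_nonpos (by linarith) h.le]
    refine (hasDerivAt_const y (0 : ℝ)).congr_of_eventuallyEq ?_
    filter_upwards [Iio_mem_nhds h] with z hz
    exact kernelPhi_of_nonpos (by linarith) (le_of_lt hz)
  · exact hasDerivAt_kernelPhi_of_pos h

lemma kernelPhi_sq_le {b σ : ℝ} (hb : 2 < b) (hσ : 0 ≤ σ) :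
    kernelPhi b σ ^ 2 / 16 ≤ σ * kernelPhi (b - 1) σ ^ 2 := by
  have hmono : MonotoneOn (fun σ => σ * kernelPhi (b - 1) σ ^ 2 - kernelPhi b σ ^ 2 / 16)
      (Ici 0) := by
    have hd : ∀ x : ℝ, HasDerivAt (fun σ => σ * kernelPhi (b - 1) σ ^ 2 - kernelPhi b σ ^ 2 / 16)
        (1 * kernelPhi (b - 1) x ^ 2 + x * (2 * kernelPhi (b - 1) x ^ (2 - 1) * kernelPhi (b - 1 - 1) x)
          - 2 * kernelPhi b x ^ (2 - 1) * kernelPhi (b - 1) x / 16) x := fun x => by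
      have h1 := hasDerivAt_kernelPhi (b := b - 1) (by linarith) x
      have h2 := hasDerivAt_kernelPhi (b := b) (by linarith) x
      exact_mod_cast ((hasDerivAt_id x).mul (h1.pow 2)).sub ((h2.pow 2).div_const 16)
    refine monotoneOn_of_deriv_nonneg (convex_Ici 0)
      (fun x _ => (hd x).continuousAt.continuousWithinAt)
      (fun x _ => (hd x).differentiableAt.differentiableWithinAt) fun x hx => ?_
    rw [interior_Ici, mem_Ioi] at hx
    rw [(hd x).deriv]
    have hrec := mul_kernelPhi_sub_one (b := b - 1) hx
    rw [sub_add_cancel] at hrec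
    have : 1 * kernelPhi (b - 1) x ^ 2
        + x * (2 * kernelPhi (b - 1) x ^ (2 - 1) * kernelPhi (b - 1 - 1) x)
          - 2 * kernelPhi b x ^ (2 - 1) * kernelPhi (b - 1) x / 16
        = (2 * b - 1) * kernelPhi (b - 1) x ^ 2 := by
      norm_num
      linear_combination (2 * kernelPhi (b - 1) x) * hrec
    rw [this]
    exact mul_nonneg (by linarith) (sq_nonneg _)
  have := hmono self_mem_Ici hσ hσ
  simp only [zero_mul, kernelPhi_of_nonpos (show b ≠ 0 by linarith) le_rfl] at this
  linarith [this]

/-- The asymptotic regime `Φ_b > 0` and `√σ Φ_{b-1} / Φ_b → 1/4`. -/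
def KernelAsymp (b : ℝ) : Prop :=
  (∀ᶠ σ in atTop, 0 < kernelPhi b σ) ∧
    Tendsto (fun σ => Real.sqrt σ * kernelPhi (b - 1) σ / kernelPhi b σ) atTop (𝓝 (1 / 4))

lemma kernelAsymp_of_large {b : ℝ} (hb : 2 < b) : KernelAsymp b := by
  have hlow : ∀ c : ℝ, 2 < c → ∀ σ : ℝ, 0 < σ →
      1 / 4 ≤ Real.sqrt σ * kernelPhi (c - 1) σ / kernelPhi c σ := by
    intro c hc σ hσ
    have h0 := kernelPhi_pos (b := c) (by linarith) hσ
    have h1 := kernelPhi_pos (b := c - 1) (by linarith) hσ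
    have h2 := kernelPhi_sq_le hc hσ.le
    rw [le_div_iff₀ h0]
    refine abs_le_of_sq_le_sq' ?_ (by positivity) |>.2
    rw [mul_pow, mul_pow, Real.sq_sqrt hσ.le]
    linarith
  refine ⟨(eventually_gt_atTop 0).mono fun σ hσ => kernelPhi_pos (by linarith) hσ, ?_⟩
  have hup : ∀ σ : ℝ, 0 < σ →
      Real.sqrt σ * kernelPhi (b - 1) σ / kernelPhi b σ ≤ b / Real.sqrt σ + 1 / 4 := by
    intro σ hσ
    have h0 := kernelPhi_pos (b := b) (by linarith) hσ
    have h2 := kernelPhi_pos (b := b + 1) (by linarith) hσ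
    have hs : 0 < Real.sqrt σ := Real.sqrt_pos.2 hσ
    have hl := hlow (b + 1) (by linarith) σ hσ
    rw [add_sub_cancel_right, le_div_iff₀ h2] at hl
    have hrec := mul_kernelPhi_sub_one (b := b) hσ
    have hσs : σ = Real.sqrt σ * Real.sqrt σ := (Real.mul_self_sqrt hσ.le).symm
    rw [div_le_iff₀ h0]
    have : Real.sqrt σ * (Real.sqrt σ * kernelPhi (b - 1) σ)
        ≤ Real.sqrt σ * ((b / Real.sqrt σ + 1 / 4) * kernelPhi b σ) := by
      have e1 : Real.sqrt σ * ((b / Real.sqrt σ + 1 / 4) * kernelPhi b σ)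
          = b * kernelPhi b σ + Real.sqrt σ * kernelPhi b σ / 4 := by
        field_simp
      rw [← mul_assoc, ← hσs, hrec, e1]
      linarith
    exact le_of_mul_le_mul_left this hs
  refine tendsto_of_tendsto_of_tendsto_of_le_of_le' tendsto_const_nhds (h := fun σ => b / Real.sqrt σ + 1 / 4)
    ?_ ((eventually_gt_atTop 0).mono fun σ hσ => hlow b hb σ hσ)
    ((eventually_gt_atTop 0).mono fun σ hσ => hup σ hσ)
  have : Tendsto (fun σ : ℝ => b / Real.sqrt σ + 1 / 4) atTop (𝓝 (0 + 1 / 4)) :=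
    (tendsto_const_nhds.div_atTop Real.tendsto_sqrt_atTop).add_const _
  simpa using this

lemma KernelAsymp.sub_one {b : ℝ} (h : KernelAsymp b) : KernelAsymp (b - 1) := by
  obtain ⟨hpos, hlim⟩ := h
  have hpos' : ∀ᶠ σ in atTop, 0 < kernelPhi (b - 1) σ := by
    filter_upwards [hpos, hlim.eventually (lt_mem_nhds (show (0 : ℝ) < 1 / 4 by norm_num)),
      eventually_gt_atTop 0] with σ h1 h2 h3
    have h4 := (div_pos_iff_of_pos_right h1).1 h2
    exact (mul_pos_iff_of_pos_left (Real.sqrt_pos.2 h3)).1 h4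
  refine ⟨hpos', ?_⟩
  have h1 : Tendsto (fun σ : ℝ => (b - 1) / Real.sqrt σ
      + 1 / 16 * (Real.sqrt σ * kernelPhi (b - 1) σ / kernelPhi b σ)⁻¹) atTop
      (𝓝 (0 + 1 / 16 * (1 / 4)⁻¹)) :=
    (tendsto_const_nhds.div_atTop Real.tendsto_sqrt_atTop).add
      ((hlim.inv₀ (by norm_num)).const_mul _)
  have h2 : (0 : ℝ) + 1 / 16 * (1 / 4)⁻¹ = 1 / 4 := by norm_num
  rw [h2] at h1
  refine h1.congr' ?_
  filter_upwards [hpos, hpos', eventually_gt_atTop 0] with σ h3 h4 h5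
  have hrec := mul_kernelPhi_sub_one (b := b - 1) h5
  rw [sub_add_cancel] at hrec
  have hs : 0 < Real.sqrt σ := Real.sqrt_pos.2 h5
  have hσs : Real.sqrt σ ^ 2 = σ := Real.sq_sqrt h5.le
  field_simp
  rw [hσs]
  linarith

lemma kernelAsymp (b : ℝ) : KernelAsymp b := by
  obtain ⟨k, hk⟩ := exists_nat_gt (2 - b)
  have : ∀ j : ℕ, KernelAsymp (b + k - j) := by
    intro j
    induction j with
    | zero => exact kernelAsymp_of_large (by push_cast; linarith)
    | succ j ih =>
      have := ih.sub_one
      rw [sub_sub] at this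
      exact_mod_cast this
  simpa using this k

lemma hasDerivAt_setIntegral_of_isCompact {α : Type*} [TopologicalSpace α] [MeasurableSpace α]
    [OpensMeasurableSpace α] [T2Space α] {μ : Measure α} [IsFiniteMeasureOnCompacts μ]
    {K : Set α} (hK : IsCompact K) {F F' : ℝ → α → ℝ} {S : Set ℝ} (hS : IsOpen S)
    (hF : ∀ t ∈ S, ContinuousOn (F t) K)
    (hF' : ContinuousOn (Function.uncurry F') (S ×ˢ K))
    (hd : ∀ t ∈ S, ∀ x ∈ K, HasDerivAt (fun t => F t x) (F' t x) t) {t₀ : ℝ} (ht₀ : t₀ ∈ S) :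
    HasDerivAt (fun t => ∫ x in K, F t x ∂μ) (∫ x in K, F' t₀ x ∂μ) t₀ := by
  obtain ⟨ε, hε, hεS⟩ := Metric.isOpen_iff.1 hS t₀ ht₀
  have hsub : closedBall t₀ (ε / 2) ⊆ S :=
    (closedBall_subset_ball (by linarith)).trans hεS
  obtain ⟨C, hC⟩ := ((isCompact_closedBall t₀ (ε / 2)).prod hK).exists_bound_of_continuousOn
    (hF'.mono (prod_mono hsub subset_rfl))
  have hKm : MeasurableSet K := hK.measurableSet
  refine (hasDerivAt_integral_of_dominated_loc_of_deriv_le (μ := μ.restrict K)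
    (bound := fun _ => C) (closedBall_mem_nhds t₀ (half_pos hε)) ?_ ?_ ?_ ?_ ?_ ?_).2
  · filter_upwards [hS.mem_nhds ht₀] with t ht
    exact (hF t ht).aestronglyMeasurable_of_isCompact hK hKm
  · exact (hF t₀ ht₀).integrableOn_compact hK
  · refine ContinuousOn.aestronglyMeasurable_of_isCompact ?_ hK hKm
    exact hF'.comp (f := fun x => (t₀, x)) (by fun_prop) fun x hx => ⟨ht₀, hx⟩
  · filter_upwards [ae_restrict_mem hKm] with x hx t ht
    exact hC (t, x) ⟨ht, hx⟩
  · have : IsFiniteMeasure (μ.restrict K) := ⟨by simpa using hK.measure_lt_top⟩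
    exact integrable_const C
  · filter_upwards [ae_restrict_mem hKm] with x hx t ht
    exact hd t (hsub ht) x hx

section DirDeriv

variable {E : Type*} [NormedAddCommGroup E] [NormedSpace ℝ E]

/-- Derivative in the direction `e`, as an operator on functions. -/
def dirDeriv (e : E) (F : E → ℝ) (p : E) : ℝ := fderiv ℝ F p e

lemma ContDiff.dirDeriv {F : E → ℝ} (hF : ContDiff ℝ (⊤ : ℕ∞) F) (e : E) :
    ContDiff ℝ (⊤ : ℕ∞) (dirDeriv e F) :=
  (hF.fderiv_right (by simp)).clm_apply contDiff_const

lemma dirDeriv_comm {F : E → ℝ} (hF : ContDiff ℝ (⊤ : ℕ∞) F) (e e' : E) :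
    dirDeriv e (dirDeriv e' F) = dirDeriv e' (dirDeriv e F) := by
  funext p
  have hd : DifferentiableAt ℝ (fderiv ℝ F) p :=
    ((hF.fderiv_right (m := (⊤ : ℕ∞)) (by simp)).differentiable (by simp)) p
  have hs : IsSymmSndFDerivAt ℝ F p := hF.contDiffAt.isSymmSndFDerivAt (by
    rw [minSmoothness_of_isRCLikeNormedField]
    exact WithTop.coe_le_coe.2 (le_top : (2 : ℕ∞) ≤ ⊤))
  have key : ∀ a b : E, dirDeriv a (dirDeriv b F) p = fderiv ℝ (fderiv ℝ F) p a b := by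
    intro a b
    unfold dirDeriv
    rw [fderiv_clm_apply hd (differentiableAt_const b)]
    simp
  rw [key, key, hs.eq]

lemma DifferentiableAt.hasDerivAt_line {F : E → ℝ} {p e : E} {s : ℝ}
    (hF : DifferentiableAt ℝ F (p + s • e)) :
    HasDerivAt (fun r : ℝ => F (p + r • e)) (dirDeriv e F (p + s • e)) s := by
  have h : HasDerivAt (fun r : ℝ => p + r • e) e s := by
    simpa using ((hasDerivAt_id s).smul_const e).const_add p
  exact hF.hasFDerivAt.comp_hasDerivAt s h

lemma dirDeriv_eq_zero_of_eventuallyEq {F : E → ℝ} {p : E} (e : E)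
    (h : F =ᶠ[𝓝 p] fun _ => 0) : dirDeriv e F p = 0 := by
  rw [dirDeriv, h.fderiv_eq]
  simp

end DirDeriv

section ParametricIntegral

variable {P X : Type*} [NormedAddCommGroup P] [NormedSpace ℝ P] [NormedAddCommGroup X]
  [InnerProductSpace ℝ X] [FiniteDimensional ℝ X] [MeasurableSpace X] [BorelSpace X]

lemma contDiff_integral_unitBall {μ : Measure X} [μ.IsAddHaarMeasure] {k : X → ℝ}
    (hkc : Continuous k) (hk : ∀ y, 1 ≤ ‖y‖ → k y = 0) {F : P × X → ℝ}
    (hF : ContDiff ℝ (⊤ : ℕ∞) F) :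
    ContDiff ℝ (⊤ : ℕ∞) (fun p => ∫ y, k y * F (p, y) ∂μ) := by
  let χ : ContDiffBump (0 : X) := ⟨1, 2, one_pos, one_lt_two⟩
  have hχ : ContDiff ℝ (⊤ : ℕ∞) (χ : X → ℝ) := χ.contDiff
  have h := contDiffOn_convolution_right_with_param (𝕜 := ℝ) (μ := μ) (n := ⊤)
    (ContinuousLinearMap.mul ℝ ℝ) (f := k)
    (g := fun (p : P) (y : X) => χ y * F (p, -y)) (s := univ) (k := closedBall (0 : X) 2)
    isOpen_univ (isCompact_closedBall 0 2)
    (fun p y _ hy => by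
      have : χ y = 0 := χ.zero_of_le_dist (by
        rw [mem_closedBall, not_le] at hy
        exact hy.le)
      simp [this])
    hkc.locallyIntegrable
    (by
      refine ContDiff.contDiffOn ?_
      exact (hχ.comp contDiff_snd).mul (hF.comp (contDiff_fst.prodMk contDiff_snd.neg)))
  rw [univ_prod_univ, contDiffOn_univ] at h
  have h2 := h.comp ((contDiff_id (E := P)).prodMk (contDiff_const (c := (0 : X))))
  convert h2 using 1
  funext p
  simp only [Function.comp, convolution_def, ContinuousLinearMap.mul_apply', id, zero_sub, neg_neg]
  refine integral_congr_ae (Eventually.of_forall fun y => ?_)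
  rcases le_or_gt 1 ‖y‖ with hy | hy
  · simp [hk y hy]
  · have h1 : χ (-y) = 1 := χ.one_of_mem_closedBall (by simpa using hy.le)
    simp [h1]

end ParametricIntegral

section KernelIntegral

lemma continuousOn_kernelPhi_comp {α : Type*} [TopologicalSpace α] {b : ℝ} {σ : α → ℝ} {s : Set α}
    (hσ : ContinuousOn σ s) (hb : 0 ≤ b ∨ ∀ z ∈ s, 0 < σ z) :
    ContinuousOn (fun z => kernelPhi b (σ z)) s := by
  rcases hb with hb | hb
  · exact (continuous_kernelPhi hb).comp_continuousOn hσ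
  · intro z hz
    exact (continuousAt_kernelPhi_of_pos (hb z hz)).comp_continuousWithinAt (hσ z hz)

lemma integral_mul_eq_setIntegral_tsupport {α : Type*} [TopologicalSpace α] [MeasurableSpace α]
    {μ : Measure α} (F χ : α → ℝ) :
    ∫ z, F z * χ z ∂μ = ∫ z in tsupport χ, F z * χ z ∂μ := by
  symm
  refine setIntegral_eq_integral_of_forall_compl_eq_zero fun z hz => ?_
  rw [image_eq_zero_of_notMem_tsupport hz, mul_zero]

/-- Differentiation of `s ↦ ∫ Φ_b(σ(s,z)) a(s,z) χ(z) dz` under the integral sign. -/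
lemma hasDerivAt_integral_kernelPhi {α : Type*} [TopologicalSpace α] [MeasurableSpace α]
    [OpensMeasurableSpace α] [T2Space α] {μ : Measure α} [IsFiniteMeasureOnCompacts μ]
    {b : ℝ} {χ : α → ℝ} (hχ : Continuous χ) (hχc : HasCompactSupport χ)
    {σ σ' a a' : ℝ → α → ℝ} {S : Set ℝ} (hS : IsOpen S)
    (hσ : Continuous (Function.uncurry σ)) (hσ' : Continuous (Function.uncurry σ'))
    (ha : Continuous (Function.uncurry a)) (ha' : Continuous (Function.uncurry a'))
    (hdσ : ∀ s z, HasDerivAt (fun s => σ s z) (σ' s z) s)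
    (hda : ∀ s z, HasDerivAt (fun s => a s z) (a' s z) s)
    (hb : 1 < b ∨ ∀ s ∈ S, ∀ z ∈ tsupport χ, 0 < σ s z) {s₀ : ℝ} (hs₀ : s₀ ∈ S) :
    HasDerivAt (fun s => ∫ z, kernelPhi b (σ s z) * a s z * χ z ∂μ)
      (∫ z, (kernelPhi (b - 1) (σ s₀ z) * σ' s₀ z * a s₀ z + kernelPhi b (σ s₀ z) * a' s₀ z)
        * χ z ∂μ) s₀ := by
  rw [funext fun s => integral_mul_eq_setIntegral_tsupport
      (fun z => kernelPhi b (σ s z) * a s z) χ, integral_mul_eq_setIntegral_tsupport]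
  have hc : ∀ c : ℝ, b - 1 ≤ c →
      ContinuousOn (fun q : ℝ × α => kernelPhi c (σ q.1 q.2)) (S ×ˢ tsupport χ) := by
    intro c hc
    refine continuousOn_kernelPhi_comp hσ.continuousOn ?_
    rcases hb with hb | hb
    · exact Or.inl (by linarith)
    · exact Or.inr fun z hz => hb z.1 hz.1 z.2 hz.2
  refine hasDerivAt_setIntegral_of_isCompact (K := tsupport χ) (S := S) hχc hS
    (F := fun s z => kernelPhi b (σ s z) * a s z * χ z)
    (F' := fun s z => (kernelPhi (b - 1) (σ s z) * σ' s z * a s z + kernelPhi b (σ s z) * a' s z)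
        * χ z) ?_ ?_ ?_ hs₀
  · intro s hs
    have h1 : ContinuousOn (fun z => kernelPhi b (σ s z)) (tsupport χ) :=
      (hc b (by linarith)).comp (f := fun z => (s, z)) (by fun_prop) fun z hz => ⟨hs, hz⟩
    have h2 : Continuous (a s) := ha.comp (f := fun z => (s, z)) (by fun_prop)
    exact (h1.mul h2.continuousOn).mul hχ.continuousOn
  · have h1 := hc (b - 1) le_rfl
    have h2 := hc b (by linarith)
    exact (((h1.mul hσ'.continuousOn).mul ha.continuousOn).add (h2.mul ha'.continuousOn)).mul
      (hχ.comp continuous_snd).continuousOn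
  · intro s hs z hz
    have h1 : HasDerivAt (kernelPhi b) (kernelPhi (b - 1) (σ s z)) (σ s z) := by
      rcases hb with hb | hb
      · exact hasDerivAt_kernelPhi hb _
      · exact hasDerivAt_kernelPhi_of_pos (hb s hs z hz)
    exact ((h1.comp s (hdσ s z)).mul (hda s z)).mul_const _

end KernelIntegral

section Potential

local notation "X" => EuclideanSpace ℝ (Fin n)

/-- The potential `(x, τ) ↦ ∫ Φ_b(τ² - |x - z|²) χ(z) dz`. -/
def potential (b : ℝ) (χ : X → ℝ) (p : X × ℝ) : ℝ :=
  ∫ z, kernelPhi b (p.2 ^ 2 - ‖p.1 - z‖ ^ 2) * χ z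

/-- The potential rescaled to the unit ball. -/
def ballPotential (b : ℝ) (χ : X → ℝ) (p : X × ℝ) : ℝ :=
  ∫ y, (max (1 - ‖y‖ ^ 2) 0) ^ b * (besselE b (p.2 ^ 2 * (1 - ‖y‖ ^ 2)) * χ (p.1 + p.2 • y))

lemma continuous_ballWeight {b : ℝ} (hb : 0 < b) :
    Continuous (fun y : X => (max (1 - ‖y‖ ^ 2) 0) ^ b) := by
  refine Continuous.rpow_const (by fun_prop) fun _ => Or.inr hb.le

lemma ballWeight_eq_zero {b : ℝ} (hb : 0 < b) (y : X) (hy : 1 ≤ ‖y‖) :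
    (max (1 - ‖y‖ ^ 2) 0) ^ b = 0 := by
  rw [max_eq_right (by nlinarith), Real.zero_rpow hb.ne']

lemma contDiff_ballPotential {b : ℝ} (hb : 0 < b) {χ : X → ℝ} (hχ : ContDiff ℝ (⊤ : ℕ∞) χ) :
    ContDiff ℝ (⊤ : ℕ∞) (ballPotential b χ) := by
  refine contDiff_integral_unitBall (μ := volume) (continuous_ballWeight hb)
    (ballWeight_eq_zero hb)
    (F := fun q : (X × ℝ) × X =>
      besselE b (q.1.2 ^ 2 * (1 - ‖q.2‖ ^ 2)) * χ (q.1.1 + q.1.2 • q.2)) ?_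
  refine ((contDiff_besselE b).comp ?_).mul (hχ.comp ?_)
  · exact (contDiff_fst.snd.pow 2).mul (contDiff_const.sub (contDiff_snd.norm_sq ℝ))
  · exact contDiff_fst.fst.add (contDiff_fst.snd.smul contDiff_snd)

lemma potential_eq_ballPotential {b : ℝ} {k : ℕ} (hk : (n : ℝ) + 2 * b = k) (χ : X → ℝ)
    {p : X × ℝ} (hp : 0 < p.2) : potential b χ p = p.2 ^ k * ballPotential b χ p := by
  obtain ⟨x, τ⟩ := p
  simp only at hp
  simp only [potential, ballPotential]
  rw [← integral_add_left_eq_self _ x]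
  have h := Measure.integral_comp_smul (volume : Measure X)
    (fun y => kernelPhi b (τ ^ 2 - ‖x - (x + y)‖ ^ 2) * χ (x + y)) τ
  have hτn : 0 < τ ^ n := pow_pos hp n
  simp only [finrank_euclideanSpace, Fintype.card_fin, smul_eq_mul,
    abs_of_pos (inv_pos.2 hτn)] at h
  rw [eq_inv_mul_iff_mul_eq₀ hτn.ne'] at h
  rw [← h, ← integral_const_mul, ← integral_const_mul]
  refine integral_congr_ae (Eventually.of_forall fun y => ?_)
  have hσ : τ ^ 2 - ‖x - (x + τ • y)‖ ^ 2 = τ ^ 2 * (1 - ‖y‖ ^ 2) := by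
    rw [sub_add_cancel_left, norm_neg, norm_smul, Real.norm_of_nonneg hp.le]
    ring
  have hmax : max (τ ^ 2 * (1 - ‖y‖ ^ 2)) 0 = τ ^ 2 * max (1 - ‖y‖ ^ 2) 0 := by
    rw [mul_max_of_nonneg _ _ (by positivity), mul_zero]
  have hpow : τ ^ k = τ ^ n * (τ ^ 2) ^ b := by
    rw [← Real.rpow_natCast τ 2, ← Real.rpow_natCast τ n, ← Real.rpow_natCast τ k,
      ← Real.rpow_mul hp.le, ← Real.rpow_add hp]
    congr 1
    push_cast
    linarith
  simp only [hσ, kernelPhi, hmax]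
  rw [Real.mul_rpow (by positivity) (le_max_right _ _), hpow]
  ring

lemma ballPotential_eq_zero {b : ℝ} (hb : 0 < b) {χ : X → ℝ} {R : ℝ}
    (hR : ∀ z, R < ‖z‖ → χ z = 0) {p : X × ℝ} (hp : R + |p.2| < ‖p.1‖) :
    ballPotential b χ p = 0 := by
  unfold ballPotential
  refine integral_eq_zero_of_ae (Eventually.of_forall fun y => ?_)
  rcases le_or_gt 1 ‖y‖ with hy | hy
  · simp only [ballWeight_eq_zero hb y hy, zero_mul, Pi.zero_apply]
  · have h1 : ‖p.2 • y‖ ≤ |p.2| := by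
      rw [norm_smul, Real.norm_eq_abs]
      exact mul_le_of_le_one_right (abs_nonneg _) hy.le
    have h2 := norm_le_add_norm_add p.1 (p.2 • y)
    simp only [hR (p.1 + p.2 • y) (by linarith), mul_zero, Pi.zero_apply]

lemma ballPotential_zero (b : ℝ) (χ : X → ℝ) (x : X) :
    ballPotential b χ (x, 0) = (∫ y : X, (max (1 - ‖y‖ ^ 2) 0) ^ b * besselE b 0) * χ x := by
  unfold ballPotential
  rw [← integral_mul_const]
  refine integral_congr_ae (Eventually.of_forall fun y => ?_)
  simp [mul_assoc]

lemma ballConst_pos {b : ℝ} (hb : 0 < b) :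
    0 < ∫ y : X, (max (1 - ‖y‖ ^ 2) 0) ^ b * besselE b 0 := by
  have hc := (continuous_ballWeight (n := n) hb).mul_const (besselE b 0)
  refine hc.integral_pos_of_hasCompactSupport_nonneg_nonzero (x := 0) ?_ ?_ ?_
  · refine HasCompactSupport.of_support_subset_isCompact (isCompact_closedBall 0 1) fun y hy => ?_
    by_contra h
    rw [mem_closedBall_zero_iff, not_le] at h
    exact hy (by simp only [ballWeight_eq_zero hb y h.le, zero_mul])
  · intro y
    exact mul_nonneg (Real.rpow_nonneg (le_max_right _ _) _) (besselE_pos hb.le le_rfl).le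
  · simpa using (besselE_pos hb.le le_rfl).ne'

end Potential

section EulerPoissonDarboux

local notation "X" => EuclideanSpace ℝ (Fin n)

lemma mul_kernelPhi_sub_one_of_one_lt {b : ℝ} (hb : 1 < b) (σ : ℝ) :
    σ * kernelPhi (b - 1) σ = b * kernelPhi b σ + kernelPhi (b + 1) σ / 16 := by
  rcases lt_or_ge 0 σ with hσ | hσ
  · exact mul_kernelPhi_sub_one hσ
  · rw [kernelPhi_of_nonpos (by linarith) hσ, kernelPhi_of_nonpos (by linarith) hσ,
      kernelPhi_of_nonpos (by linarith) hσ]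
    simp

lemma hasDerivAt_potential_snd {b : ℝ} {χ : X → ℝ} (hχ : Continuous χ) (hχc : HasCompactSupport χ)
    {x : X} {S : Set ℝ} (hS : IsOpen S)
    (hb : 1 < b ∨ ∀ s ∈ S, ∀ z ∈ tsupport χ, 0 < s ^ 2 - ‖x - z‖ ^ 2) {τ : ℝ} (hτ : τ ∈ S) :
    HasDerivAt (fun s => potential b χ (x, s)) (2 * τ * potential (b - 1) χ (x, τ)) τ := by
  have h := hasDerivAt_integral_kernelPhi (μ := volume) hχ hχc
    (σ := fun s z => s ^ 2 - ‖x - z‖ ^ 2) (σ' := fun s _ => 2 * s) (a := fun _ _ => 1)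
    (a' := fun _ _ => 0) hS (by simp only [Function.uncurry_def]; fun_prop)
    (by simp only [Function.uncurry_def]; fun_prop) (by simp only [Function.uncurry_def]; fun_prop)
    (by simp only [Function.uncurry_def]; fun_prop)
    (fun s z => by simpa using (hasDerivAt_pow 2 s).sub_const (‖x - z‖ ^ 2))
    (fun s z => hasDerivAt_const s 1) hb hτ
  simp only [mul_one, mul_zero, add_zero] at h
  refine h.congr_deriv ?_
  rw [potential, ← integral_const_mul]
  refine integral_congr_ae (Eventually.of_forall fun z => ?_)
  simp only
  ring

lemma hasDerivAt_sub_norm_sq (τ : ℝ) (x e z : X) (s : ℝ) :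
    HasDerivAt (fun s : ℝ => τ ^ 2 - ‖x + s • e - z‖ ^ 2) (-(2 * inner ℝ (x + s • e - z) e)) s := by
  have h : HasDerivAt (fun s : ℝ => x + s • e - z) e s := by
    simpa using (((hasDerivAt_id s).smul_const e).const_add x).sub_const z
  simpa using h.norm_sq.const_sub (τ ^ 2)

lemma hasDerivAt_potential_fst {b : ℝ} {χ : X → ℝ} (hχ : Continuous χ) (hχc : HasCompactSupport χ)
    {x e : X} {τ : ℝ} {S : Set ℝ} (hS : IsOpen S)
    (hb : 1 < b ∨ ∀ s ∈ S, ∀ z ∈ tsupport χ, 0 < τ ^ 2 - ‖x + s • e - z‖ ^ 2)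
    {s₀ : ℝ} (hs₀ : s₀ ∈ S) :
    HasDerivAt (fun s => potential b χ (x + s • e, τ))
      (∫ z, kernelPhi (b - 1) (τ ^ 2 - ‖x + s₀ • e - z‖ ^ 2) * (-(2 * inner ℝ (x + s₀ • e - z) e))
        * χ z) s₀ := by
  have h := hasDerivAt_integral_kernelPhi (μ := volume) hχ hχc
    (σ := fun s z => τ ^ 2 - ‖x + s • e - z‖ ^ 2)
    (σ' := fun s z => -(2 * inner ℝ (x + s • e - z) e)) (a := fun _ _ => 1)
    (a' := fun _ _ => 0) hS (by simp only [Function.uncurry_def]; fun_prop)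
    (by simp only [Function.uncurry_def]; fun_prop) (by simp only [Function.uncurry_def]; fun_prop)
    (by simp only [Function.uncurry_def]; fun_prop)
    (fun s z => hasDerivAt_sub_norm_sq τ x e z s)
    (fun s z => hasDerivAt_const s 1) hb hs₀
  simp only [mul_one, mul_zero, add_zero] at h
  exact h

lemma hasDerivAt_potential_fst_fst {b : ℝ} (hb : 2 < b) {χ : X → ℝ} (hχ : Continuous χ)
    (hχc : HasCompactSupport χ) (x e : X) (τ s₀ : ℝ) :
    HasDerivAt (fun s : ℝ => ∫ z, kernelPhi (b - 1) (τ ^ 2 - ‖x + s • e - z‖ ^ 2) *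
        (-(2 * inner ℝ (x + s • e - z) e)) * χ z)
      (∫ z, (4 * inner ℝ (x + s₀ • e - z) e ^ 2
          * kernelPhi (b - 2) (τ ^ 2 - ‖x + s₀ • e - z‖ ^ 2)
          - 2 * ‖e‖ ^ 2 * kernelPhi (b - 1) (τ ^ 2 - ‖x + s₀ • e - z‖ ^ 2)) * χ z) s₀ := by
  have hi : ∀ s z, HasDerivAt (fun s : ℝ => -(2 * inner ℝ (x + s • e - z) e)) (-(2 * ‖e‖ ^ 2)) s := by
    intro s z
    have h : HasDerivAt (fun s : ℝ => x + s • e - z) e s := by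
      simpa using (((hasDerivAt_id s).smul_const e).const_add x).sub_const z
    exact ((h.inner ℝ (hasDerivAt_const s e)).const_mul 2).neg.congr_deriv (by simp)
  have h := hasDerivAt_integral_kernelPhi (μ := volume) (b := b - 1) hχ hχc
    (σ := fun s z => τ ^ 2 - ‖x + s • e - z‖ ^ 2)
    (σ' := fun s z => -(2 * inner ℝ (x + s • e - z) e))
    (a := fun s z => -(2 * inner ℝ (x + s • e - z) e))
    (a' := fun _ _ => -(2 * ‖e‖ ^ 2)) isOpen_univ (by simp only [Function.uncurry_def]; fun_prop)
    (by simp only [Function.uncurry_def]; fun_prop) (by simp only [Function.uncurry_def]; fun_prop)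
    (by simp only [Function.uncurry_def]; fun_prop)
    (fun s z => hasDerivAt_sub_norm_sq τ x e z s) hi (Or.inl (by linarith)) (mem_univ s₀)
  refine h.congr_deriv (integral_congr_ae (Eventually.of_forall fun z => ?_))
  simp only [sub_sub, one_add_one_eq_two]
  ring

/-- The time derivative. -/
def dtime (F : X × ℝ → ℝ) : X × ℝ → ℝ := dirDeriv ((0 : X), (1 : ℝ)) F

/-- The `i`-th spatial derivative. -/
def dspace (i : Fin n) (F : X × ℝ → ℝ) : X × ℝ → ℝ :=
  dirDeriv (EuclideanSpace.single i (1 : ℝ), (0 : ℝ)) F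

/-- The spatial Laplacian plus one quarter of the identity. -/
def lapQuarter (F : X × ℝ → ℝ) (p : X × ℝ) : ℝ := ∑ i, dspace i (dspace i F) p + F p / 4

/-- The Euler–Poisson–Darboux type equation `F_ττ + (c/τ) F_τ = ΔF + F/4` on `τ > 0`. -/
def IsEPD (c : ℝ) (F : X × ℝ → ℝ) : Prop :=
  ∀ p : X × ℝ, 0 < p.2 → p.2 * dtime (dtime F) p + c * dtime F p = p.2 * lapQuarter F p

lemma hasDerivAt_dtime {F : X × ℝ → ℝ} (hF : ContDiff ℝ (⊤ : ℕ∞) F) (x : X) (τ : ℝ) :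
    HasDerivAt (fun s => F (x, s)) (dtime F (x, τ)) τ := by
  have h := DifferentiableAt.hasDerivAt_line (F := F) (p := (x, 0)) (e := ((0 : X), (1 : ℝ)))
    (s := τ) (hF.differentiable (by simp) _)
  simpa [dtime] using h

lemma hasDerivAt_dspace {F : X × ℝ → ℝ} (hF : ContDiff ℝ (⊤ : ℕ∞) F) (i : Fin n) (x : X) (τ s : ℝ) :
    HasDerivAt (fun s => F (x + s • EuclideanSpace.single i (1 : ℝ), τ))
      (dspace i F (x + s • EuclideanSpace.single i (1 : ℝ), τ)) s := by
  have h := DifferentiableAt.hasDerivAt_line (F := F) (p := (x, τ))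
    (e := (EuclideanSpace.single i (1 : ℝ), (0 : ℝ))) (s := s) (hF.differentiable (by simp) _)
  simpa [dspace] using h

lemma sum_kernelPhi_identity {b : ℝ} (hb : 2 < b) (τ : ℝ) (w : X) :
    ∑ i, (4 * inner ℝ w (EuclideanSpace.single i (1 : ℝ)) ^ 2 * kernelPhi (b - 2) (τ ^ 2 - ‖w‖ ^ 2)
        - 2 * ‖EuclideanSpace.single i (1 : ℝ)‖ ^ 2 * kernelPhi (b - 1) (τ ^ 2 - ‖w‖ ^ 2))
      = 4 * τ ^ 2 * kernelPhi (b - 2) (τ ^ 2 - ‖w‖ ^ 2)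
        - (4 * (b - 1) + 2 * n) * kernelPhi (b - 1) (τ ^ 2 - ‖w‖ ^ 2)
        - kernelPhi b (τ ^ 2 - ‖w‖ ^ 2) / 4 := by
  have h := mul_kernelPhi_sub_one_of_one_lt (b := b - 1) (by linarith) (τ ^ 2 - ‖w‖ ^ 2)
  rw [sub_sub, one_add_one_eq_two, sub_add_cancel] at h
  have hn : ‖w‖ ^ 2 = ∑ i, w i ^ 2 := by
    rw [EuclideanSpace.norm_sq_eq]
    simp
  simp only [EuclideanSpace.inner_single_right, PiLp.norm_single, norm_one, Finset.sum_sub_distrib,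
    ← Finset.sum_mul, ← Finset.mul_sum]
  simp only [Real.ringHom_apply, one_mul, ← hn, one_pow, Finset.sum_const, Finset.card_univ,
    Fintype.card_fin, nsmul_eq_mul, mul_one]
  linear_combination -4 * h

lemma isEPD_ballPotential {b : ℝ} (hb : 2 < b) {m : ℕ} (hm : (n : ℝ) + 2 * b = 2 * m + 1)
    {χ : X → ℝ} (hχ : ContDiff ℝ (⊤ : ℕ∞) χ) (hχc : HasCompactSupport χ) :
    IsEPD (2 * m + 2) (ballPotential b χ) := by
  rintro ⟨x, τ⟩ hτ
  simp only at hτ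
  set Q := ballPotential b χ with hQ
  have hQs : ContDiff ℝ (⊤ : ℕ∞) Q := contDiff_ballPotential (by linarith) hχ
  have hZ : ∀ (x : X) {τ : ℝ}, 0 < τ → potential b χ (x, τ) = τ ^ (2 * m + 1) * Q (x, τ) :=
    fun x τ h => potential_eq_ballPotential (k := 2 * m + 1) (by push_cast; exact hm) χ
      (p := (x, τ)) h
  have ht1 : ∀ {τ : ℝ}, 0 < τ → 2 * τ * potential (b - 1) χ (x, τ)
      = (2 * m + 1) * τ ^ (2 * m) * Q (x, τ) + τ ^ (2 * m + 1) * dtime Q (x, τ) := by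
    intro τ hτ
    have h1 := hasDerivAt_potential_snd (b := b) hχ.continuous hχc (x := x) isOpen_univ
      (Or.inl (by linarith)) (mem_univ τ)
    have h2 := (hasDerivAt_pow (2 * m + 1) τ).mul (hasDerivAt_dtime hQs x τ)
    have h3 := h1.unique (h2.congr_of_eventuallyEq (by
      filter_upwards [lt_mem_nhds hτ] with s hs using hZ x hs))
    simpa using h3
  have ht2 : 2 * potential (b - 1) χ (x, τ) + 4 * τ ^ 2 * potential (b - 2) χ (x, τ)
      = (2 * m + 1) * (2 * m * τ ^ (2 * m - 1)) * Q (x, τ)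
        + 2 * (2 * m + 1) * τ ^ (2 * m) * dtime Q (x, τ)
        + τ ^ (2 * m + 1) * dtime (dtime Q) (x, τ) := by
    have h1 := ((hasDerivAt_id τ).const_mul 2).mul
      (hasDerivAt_potential_snd (b := b - 1) hχ.continuous hχc (x := x) isOpen_univ
      (Or.inl (by linarith)) (mem_univ τ))
    have h2 := (((hasDerivAt_pow (2 * m) τ).const_mul (2 * (m : ℝ) + 1)).mul
      (hasDerivAt_dtime hQs x τ)).add
      ((hasDerivAt_pow (2 * m + 1) τ).mul (hasDerivAt_dtime (F := dtime Q) (hQs.dirDeriv _) x τ))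
    have h3 := h1.unique (h2.congr_of_eventuallyEq (by
      filter_upwards [lt_mem_nhds hτ] with s hs using ht1 hs))
    simp only [sub_sub, one_add_one_eq_two, id] at h3
    push_cast at h3
    linear_combination h3
  have hx1 : ∀ (i : Fin n) (x : X), ∫ z, kernelPhi (b - 1) (τ ^ 2 - ‖x - z‖ ^ 2) *
      (-(2 * inner ℝ (x - z) (EuclideanSpace.single i (1 : ℝ)))) * χ z
      = τ ^ (2 * m + 1) * dspace i Q (x, τ) := by
    intro i x
    have h1 := hasDerivAt_potential_fst (b := b) hχ.continuous hχc (x := x) (τ := τ)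
      (e := EuclideanSpace.single i (1 : ℝ)) isOpen_univ (Or.inl (by linarith)) (mem_univ (0 : ℝ))
    simp only [hZ _ hτ] at h1
    have h2 := h1.unique ((hasDerivAt_dspace hQs i x τ 0).const_mul (τ ^ (2 * m + 1)))
    simpa using h2
  have hx2 : ∀ i : Fin n, ∫ z, (4 * inner ℝ (x - z) (EuclideanSpace.single i (1 : ℝ)) ^ 2
          * kernelPhi (b - 2) (τ ^ 2 - ‖x - z‖ ^ 2)
          - 2 * ‖EuclideanSpace.single i (1 : ℝ)‖ ^ 2
            * kernelPhi (b - 1) (τ ^ 2 - ‖x - z‖ ^ 2)) * χ z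
      = τ ^ (2 * m + 1) * dspace i (dspace i Q) (x, τ) := by
    intro i
    have h1 := hasDerivAt_potential_fst_fst hb hχ.continuous hχc x
      (EuclideanSpace.single i (1 : ℝ)) τ 0
    simp only [hx1] at h1
    have h2 := h1.unique ((hasDerivAt_dspace (hQs.dirDeriv _) i x τ 0).const_mul (τ ^ (2 * m + 1)))
    simpa [dspace] using h2
  have hcont : ∀ c : ℝ, b - 2 ≤ c → Continuous fun z => kernelPhi c (τ ^ 2 - ‖x - z‖ ^ 2) :=
    fun c hc => (continuous_kernelPhi (by linarith)).comp (by fun_prop)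
  have hint : ∀ {F : X → ℝ}, Continuous F → Integrable (fun z => F z * χ z) := fun hF =>
    (hF.mul hχ.continuous).integrable_of_hasCompactSupport hχc.mul_left
  have hsum : τ ^ (2 * m + 1) * ∑ i, dspace i (dspace i Q) (x, τ)
      = 4 * τ ^ 2 * potential (b - 2) χ (x, τ)
        - (4 * (b - 1) + 2 * n) * potential (b - 1) χ (x, τ) - potential b χ (x, τ) / 4 := by
    have hc1 := hcont (b - 1) (by linarith)
    have hc2 := hcont (b - 2) le_rfl
    have hc0 := hcont b (by linarith)
    rw [Finset.mul_sum, ← Finset.sum_congr rfl fun i _ => hx2 i, ← integral_finsetSum]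
    · simp only [← Finset.sum_mul, sum_kernelPhi_identity hb]
      simp only [sub_mul]
      rw [integral_sub, integral_sub]
      · simp only [potential, mul_assoc, div_mul_eq_mul_div, integral_const_mul, integral_div]
      · exact hint (by fun_prop)
      · exact hint (by fun_prop)
      · exact (hint (F := fun z => _ - _) (by fun_prop)).congr
          (Eventually.of_forall fun z => sub_mul _ _ _)
      · exact hint (by fun_prop)
    · intro i _
      exact hint (by fun_prop)
  have e1 := ht1 hτ
  rw [hZ x hτ] at hsum
  have hm' : 4 * (b - 1) + 2 * n = 4 * m - 2 := by linarith
  rw [hm'] at hsum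
  simp only [lapQuarter]
  have hpow : (2 * m : ℝ) * τ ^ (2 * m - 1) * τ = 2 * m * τ ^ (2 * m) := by
    rcases Nat.eq_zero_or_pos m with rfl | hm0
    · simp
    · rw [mul_assoc, ← pow_succ, Nat.sub_add_cancel (by omega)]
  have hne : τ ^ (2 * m + 1) ≠ 0 := (pow_pos hτ _).ne'
  refine mul_left_cancel₀ hne ?_
  linear_combination -τ * hsum - τ * ht2 + 2 * m * e1 - (2 * m + 1) * Q (x, τ) * hpow

end EulerPoissonDarboux

section WaveSolution

local notation "X" => EuclideanSpace ℝ (Fin n)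

lemma dirDeriv_const_mul_add_snd_mul {F G : X × ℝ → ℝ} (hF : ContDiff ℝ (⊤ : ℕ∞) F)
    (hG : ContDiff ℝ (⊤ : ℕ∞) G) (c : ℝ) (e p : X × ℝ) :
    dirDeriv e (fun p => c * F p + p.2 * G p) p
      = c * dirDeriv e F p + e.2 * G p + p.2 * dirDeriv e G p := by
  have hF' : HasFDerivAt F (fderiv ℝ F p) p := (hF.differentiable (by simp) p).hasFDerivAt
  have hG' : HasFDerivAt G (fderiv ℝ G p) p := (hG.differentiable (by simp) p).hasFDerivAt
  have h := (hF'.const_mul c).add ((hasFDerivAt_snd (𝕜 := ℝ) (p := p)).mul hG')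
  have h' : HasFDerivAt (fun p => c * F p + p.2 * G p) _ p := h
  simp only [dirDeriv, h'.fderiv]
  simp
  ring

lemma dirDeriv_zero {E : Type*} [NormedAddCommGroup E] [NormedSpace ℝ E] (e : E) :
    dirDeriv e (fun _ => 0) = fun _ => 0 := by
  funext p
  simp [dirDeriv]

lemma ContDiff.lapQuarter {F : X × ℝ → ℝ} (hF : ContDiff ℝ (⊤ : ℕ∞) F) :
    ContDiff ℝ (⊤ : ℕ∞) (lapQuarter F) :=
  (ContDiff.sum fun _ _ => (hF.dirDeriv _).dirDeriv _).add (hF.div_const 4)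

lemma dtime_lapQuarter {F : X × ℝ → ℝ} (hF : ContDiff ℝ (⊤ : ℕ∞) F) :
    dtime (lapQuarter F) = lapQuarter (dtime F) := by
  funext p
  have hF' : HasFDerivAt F (fderiv ℝ F p) p := (hF.differentiable (by simp) p).hasFDerivAt
  have hs : ∀ i ∈ (Finset.univ : Finset (Fin n)), HasFDerivAt (dspace i (dspace i F))
      (fderiv ℝ (dspace i (dspace i F)) p) p := fun i _ =>
    (((hF.dirDeriv _).dirDeriv _).differentiable (by simp) p).hasFDerivAt
  have h := (HasFDerivAt.fun_sum hs).add (hF'.mul_const (4⁻¹ : ℝ))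
  have h' : HasFDerivAt (lapQuarter F) _ p := h
  have hcomm : ∀ i : Fin n, dtime (dspace i (dspace i F)) = dspace i (dspace i (dtime F)) := by
    intro i
    have h1 : dtime (dspace i (dspace i F)) = dspace i (dtime (dspace i F)) :=
      dirDeriv_comm (hF.dirDeriv _) _ _
    have h2 : dtime (dspace i F) = dspace i (dtime F) := dirDeriv_comm hF _ _
    rw [h1, h2]
  simp only [_root_.lapQuarter, ← hcomm]
  rw [dtime, dirDeriv, h'.fderiv]
  simp [dtime, dirDeriv, div_eq_mul_inv, mul_comm]

lemma lapQuarter_const_mul_add_snd_mul {F G : X × ℝ → ℝ} (hF : ContDiff ℝ (⊤ : ℕ∞) F)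
    (hG : ContDiff ℝ (⊤ : ℕ∞) G) (c : ℝ) (p : X × ℝ) :
    lapQuarter (fun p => c * F p + p.2 * G p) p = c * lapQuarter F p + p.2 * lapQuarter G p := by
  have h1 : ∀ (i : Fin n) {F G : X × ℝ → ℝ}, ContDiff ℝ (⊤ : ℕ∞) F → ContDiff ℝ (⊤ : ℕ∞) G →
      dspace i (fun p => c * F p + p.2 * G p)
        = fun p => c * dspace i F p + p.2 * dspace i G p := by
    intro i F G hF hG
    funext p
    have := dirDeriv_const_mul_add_snd_mul hF hG c (EuclideanSpace.single i (1 : ℝ), (0 : ℝ)) p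
    simpa [dspace] using this
  have h2 : ∀ i : Fin n, dspace i (dspace i (fun p => c * F p + p.2 * G p)) p
      = c * dspace i (dspace i F) p + p.2 * dspace i (dspace i G) p := by
    intro i
    rw [h1 i hF hG, h1 i (F := dspace i F) (G := dspace i G) (hF.dirDeriv _) (hG.dirDeriv _)]
  simp only [lapQuarter, h2, Finset.sum_add_distrib, ← Finset.mul_sum]
  ring

/-- The operator `(c - 1) + τ ∂_τ`, which lowers the index of the Euler–Poisson–Darboux type
equation by two. -/
def epdStep (c : ℝ) (F : X × ℝ → ℝ) (p : X × ℝ) : ℝ := (c - 1) * F p + p.2 * dtime F p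

lemma ContDiff.epdStep {F : X × ℝ → ℝ} (hF : ContDiff ℝ (⊤ : ℕ∞) F) (c : ℝ) :
    ContDiff ℝ (⊤ : ℕ∞) (epdStep c F) :=
  (contDiff_const.mul hF).add (contDiff_snd.mul (hF.dirDeriv _))

lemma IsEPD.dtime_epdStep {c : ℝ} {F : X × ℝ → ℝ} (hF : ContDiff ℝ (⊤ : ℕ∞) F) (h : IsEPD c F)
    {p : X × ℝ} (hp : 0 < p.2) : dtime (epdStep c F) p = p.2 * lapQuarter F p := by
  have h1 := dirDeriv_const_mul_add_snd_mul hF (hF.dirDeriv ((0 : X), (1 : ℝ))) (c - 1)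
    ((0 : X), (1 : ℝ)) p
  rw [← h p hp]
  change dirDeriv _ _ _ = _
  refine h1.trans ?_
  simp only [dtime]
  ring

lemma IsEPD.step {c : ℝ} {F : X × ℝ → ℝ} (hF : ContDiff ℝ (⊤ : ℕ∞) F) (h : IsEPD c F) :
    IsEPD (c - 2) (epdStep c F) := by
  intro p hp
  have h2 : dtime (dtime (epdStep c F)) p = lapQuarter F p + p.2 * lapQuarter (dtime F) p := by
    have hev : dtime (epdStep c F) =ᶠ[𝓝 p] fun q => 0 * F q + q.2 * lapQuarter F q := by
      filter_upwards [(isOpen_lt continuous_const continuous_snd).mem_nhds hp] with q hq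
      rw [h.dtime_epdStep hF hq]
      ring
    have h3 := dirDeriv_const_mul_add_snd_mul hF hF.lapQuarter 0 ((0 : X), (1 : ℝ)) p
    rw [← dtime_lapQuarter hF]
    rw [dtime, dirDeriv, hev.fderiv_eq]
    refine h3.trans ?_
    simp only [dtime]
    ring
  rw [h2, h.dtime_epdStep hF hp]
  have h4 : lapQuarter (epdStep c F) p
      = (c - 1) * lapQuarter F p + p.2 * lapQuarter (dtime F) p :=
    lapQuarter_const_mul_add_snd_mul hF (hF.dirDeriv _) (c - 1) p
  rw [h4]
  ring

lemma dtime_eq_zero_of_forall {F : X × ℝ → ℝ} {R : ℝ}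
    (h : ∀ p : X × ℝ, R + |p.2| < ‖p.1‖ → F p = 0) (p : X × ℝ) (hp : R + |p.2| < ‖p.1‖) :
    dtime F p = 0 := by
  refine dirDeriv_eq_zero_of_eventuallyEq _ ?_
  have ho : IsOpen {p : X × ℝ | R + |p.2| < ‖p.1‖} := isOpen_lt (by fun_prop) (by fun_prop)
  filter_upwards [ho.mem_nhds hp] with q hq using h q hq

lemma exists_epd (j : ℕ) {b : ℝ} (hb : 2 < b) {m : ℕ} (hm : (n : ℝ) + 2 * b = 2 * m + 1) (k : ℕ)
    (hjk : j + k = m) : ∃ a : ℝ, 0 < a ∧ ∀ χ : X → ℝ, ContDiff ℝ (⊤ : ℕ∞) χ →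
      HasCompactSupport χ → ∃ F : X × ℝ → ℝ, ContDiff ℝ (⊤ : ℕ∞) F ∧ IsEPD (2 * k + 2) F ∧
        (∀ x, F (x, 0) = a * χ x) ∧
        (∀ R, (∀ z, R < ‖z‖ → χ z = 0) → ∀ p : X × ℝ, R + |p.2| < ‖p.1‖ → F p = 0) ∧
        (∀ x r, 0 ≤ r → (∀ z ∈ tsupport χ, ‖x - z‖ ≤ r) → ∀ τ, r < τ →
          2 ^ j * potential (b - j) χ (x, τ) = τ ^ (2 * k + 1) * F (x, τ)) := by
  induction j generalizing k with
  | zero =>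
    obtain rfl : k = m := by omega
    refine ⟨_, ballConst_pos (n := n) (b := b) (by linarith), fun χ hχ hχc =>
      ⟨ballPotential b χ, contDiff_ballPotential (by linarith) hχ,
        isEPD_ballPotential hb hm hχ hχc, ballPotential_zero b χ, fun R hR p hp =>
        ballPotential_eq_zero (by linarith) hR hp, fun x r hr _ τ hτ => ?_⟩⟩
    have := potential_eq_ballPotential (k := 2 * k + 1) (by push_cast; exact hm) χ
      (p := (x, τ)) (hr.trans_lt hτ)
    simpa using this
  | succ j ih =>
    obtain ⟨a, ha, h⟩ := ih (k + 1) (by omega)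
    refine ⟨(2 * k + 3) * a, by positivity, fun χ hχ hχc => ?_⟩
    obtain ⟨F, hF, hepd, hF0, hFs, hFr⟩ := h χ hχ hχc
    refine ⟨epdStep (2 * (k + 1 : ℕ) + 2) F, hF.epdStep _, ?_, ?_, ?_, ?_⟩
    · have := hepd.step hF
      convert this using 1
      push_cast
      ring
    · intro x
      simp only [epdStep, hF0]
      push_cast
      ring
    · intro R hR p hp
      simp only [epdStep, hFs R hR p hp, dtime_eq_zero_of_forall (hFs R hR) p hp]
      ring
    · intro x r hr hz τ hτ
      have hτ0 : 0 < τ := hr.trans_lt hτ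
      have h1 := (hasDerivAt_potential_snd (b := b - j) hχ.continuous hχc (x := x)
        (S := Ioi r) isOpen_Ioi (Or.inr fun s hs z hzs => by
          have := hz z hzs
          have hs' : r < s := hs
          have := norm_nonneg (x - z)
          nlinarith) hτ).const_mul (2 ^ j : ℝ)
      have h2 := (hasDerivAt_pow (2 * (k + 1) + 1) τ).mul (hasDerivAt_dtime hF x τ)
      have h3 := h1.unique (h2.congr_of_eventuallyEq (by
        filter_upwards [Ioi_mem_nhds hτ] with s hs using hFr x r hr hz s hs))
      rw [Nat.add_sub_cancel] at h3
      push_cast at h3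
      simp only [epdStep]
      push_cast
      rw [← sub_sub]
      refine mul_left_cancel₀ hτ0.ne' ?_
      linear_combination h3

/-- Existence of solutions of `v_ττ = Δv + v/4` with initial data `(0, c χ)`, together with their
representation by the kernel in the interior of the light cone. -/
lemma exists_wave_solution (n : ℕ) : ∃ c : ℝ, 0 < c ∧ ∀ χ : EuclideanSpace ℝ (Fin n) → ℝ,
    ContDiff ℝ (⊤ : ℕ∞) χ → HasCompactSupport χ →
      ∃ v : EuclideanSpace ℝ (Fin n) × ℝ → ℝ, ContDiff ℝ (⊤ : ℕ∞) v ∧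
        (∀ p, 0 < p.2 → dtime (dtime v) p = lapQuarter v p) ∧
        (∀ x, v (x, 0) = 0) ∧ (∀ x, dtime v (x, 0) = c * χ x) ∧
        (∀ R, (∀ z, R < ‖z‖ → χ z = 0) → ∀ p, R + |p.2| < ‖p.1‖ → v p = 0) ∧
        (∀ x r, 0 ≤ r → (∀ z ∈ tsupport χ, ‖x - z‖ ≤ r) → ∀ τ, r < τ →
          v (x, τ) = potential ((1 - n) / 2) χ (x, τ) ∧
          dtime v (x, τ) = 2 * τ * potential ((1 - n) / 2 - 1) χ (x, τ)) := by
  have hnn : (0 : ℝ) ≤ n := Nat.cast_nonneg n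
  obtain ⟨a, ha, h⟩ := exists_epd (n := n) (n + 3) (b := ((n : ℝ) + 7) / 2) (by linarith)
    (m := n + 3) (by push_cast; ring) 0 rfl
  refine ⟨a / 2 ^ (n + 3), by positivity, fun χ hχ hχc => ?_⟩
  obtain ⟨F, hF, hepd, hF0, hFs, hFr⟩ := h χ hχ hχc
  set A : ℝ := (2 ^ (n + 3))⁻¹ with hA
  have hG : ContDiff ℝ (⊤ : ℕ∞) (fun p => A * F p) := contDiff_const.mul hF
  set v : EuclideanSpace ℝ (Fin n) × ℝ → ℝ := fun p => 0 * F p + p.2 * (A * F p) with hv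
  have hvs : ContDiff ℝ (⊤ : ℕ∞) v := (contDiff_const.mul hF).add (contDiff_snd.mul hG)
  have hdG : ∀ e : EuclideanSpace ℝ (Fin n) × ℝ, dirDeriv e (fun p => A * F p)
      = fun p => A * dirDeriv e F p := by
    intro e
    funext p
    have := dirDeriv_const_mul_add_snd_mul hF (contDiff_const (c := (0 : ℝ))) A e p
    simpa [dirDeriv_zero] using this
  have hd1 : dtime v = fun p => A * F p + p.2 * (A * dtime F p) := by
    funext p
    have := dirDeriv_const_mul_add_snd_mul hF hG 0 (0, (1 : ℝ)) p
    refine Eq.trans this ?_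
    rw [hdG, dtime]
    ring
  have hreg : ∀ x r, 0 ≤ r → (∀ z ∈ tsupport χ, ‖x - z‖ ≤ r) → ∀ τ, r < τ →
      v (x, τ) = potential ((1 - n) / 2) χ (x, τ) := by
    intro x r hr hz τ hτ
    have := hFr x r hr hz τ hτ
    have hb : ((n : ℝ) + 7) / 2 - (n + 3 : ℕ) = (1 - n) / 2 := by push_cast; ring
    rw [hb] at this
    simp only [hv, hA]
    field_simp
    linarith
  refine ⟨v, hvs, ?_, ?_, ?_, ?_, ?_⟩
  · intro p hp
    have h1 : dtime (dtime v) p = A * (p.2 * dtime (dtime F) p + 2 * dtime F p) := by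
      rw [hd1]
      have := dirDeriv_const_mul_add_snd_mul hF (contDiff_const.mul (hF.dirDeriv (0, (1 : ℝ)))) A
        (0, (1 : ℝ)) p (G := fun p => A * dtime F p)
      refine Eq.trans this ?_
      have h0 : ContDiff ℝ (⊤ : ℕ∞) (dtime F) := hF.dirDeriv _
      have h2 := dirDeriv_const_mul_add_snd_mul h0 (contDiff_const (c := (0 : ℝ))) A (0, (1 : ℝ)) p
      simp only [mul_zero, add_zero, dirDeriv_zero] at h2
      rw [h2]
      simp only [dtime]
      ring
    have h2 := hepd p hp
    simp only [Nat.cast_zero, mul_zero, zero_add] at h2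
    rw [h1, h2, hv, lapQuarter_const_mul_add_snd_mul hF hG]
    have h3 := lapQuarter_const_mul_add_snd_mul hF (contDiff_const (c := (0 : ℝ))) A p
    have h4 : lapQuarter (fun _ : EuclideanSpace ℝ (Fin n) × ℝ => (0 : ℝ)) p = 0 := by
      simp [lapQuarter, dspace, dirDeriv_zero]
    simp only [mul_zero, add_zero, h4] at h3
    rw [h3]
    ring
  · intro x
    simp [hv]
  · intro x
    rw [hd1]
    simp only [hF0, hA]
    ring
  · intro R hR p hp
    simp [hv, hFs R hR p hp]
  · intro x r hr hz τ hτ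
    refine ⟨hreg x r hr hz τ hτ, ?_⟩
    have h1 := hasDerivAt_potential_snd (b := (1 - n) / 2) hχ.continuous hχc (x := x)
      (S := Ioi r) isOpen_Ioi (Or.inr fun s hs z hzs => by
        have := hz z hzs
        have hs' : r < s := hs
        have := norm_nonneg (x - z)
        nlinarith) hτ
    exact (hasDerivAt_dtime hvs x τ).unique (h1.congr_of_eventuallyEq (by
      filter_upwards [Ioi_mem_nhds hτ] with s hs using hreg x r hr hz s hs))

end WaveSolution

section GreenIdentity

local notation "X" => EuclideanSpace ℝ (Fin n)

lemma ContDiffAt.dirDeriv {E : Type*} [NormedAddCommGroup E] [NormedSpace ℝ E] {F : E → ℝ} {p : E}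
    {k : ℕ} (hF : ContDiffAt ℝ (k + 1 : ℕ) F p) (e : E) :
    ContDiffAt ℝ k (dirDeriv e F) p :=
  (hF.fderiv_right (m := k) (by norm_cast)).clm_apply contDiffAt_const

lemma DifferentiableAt.hasDerivAt_dtime {F : X × ℝ → ℝ} {x : X} {τ : ℝ}
    (hF : DifferentiableAt ℝ F (x, τ)) : HasDerivAt (fun s => F (x, s)) (dtime F (x, τ)) τ := by
  have h := DifferentiableAt.hasDerivAt_line (F := F) (p := (x, 0)) (e := ((0 : X), (1 : ℝ)))
    (s := τ) (by simpa using hF)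
  simpa [dtime] using h

lemma DifferentiableAt.dirDeriv_slice {F : X × ℝ → ℝ} {x : X} {τ : ℝ} (i : Fin n)
    (hF : DifferentiableAt ℝ F (x, τ)) :
    dirDeriv (EuclideanSpace.single i (1 : ℝ)) (fun z => F (z, τ)) x = dspace i F (x, τ) := by
  have h := hF.hasFDerivAt.comp x (hasFDerivAt_prodMk_left (𝕜 := ℝ) x τ)
  have h' : HasFDerivAt (fun z => F (z, τ)) _ x := h
  rw [dirDeriv, h'.fderiv]
  simp [dspace, dirDeriv]

/-- The partial Laplacian in the space variable. -/
def lapSpace (F : X × ℝ → ℝ) (p : X × ℝ) : ℝ := ∑ i, dspace i (dspace i F) p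

lemma lap_eq_sum_dirDeriv {a : X → ℝ} (ha : ContDiff ℝ 2 a) (x : X) :
    lap a x = ∑ i, dirDeriv (EuclideanSpace.single i (1 : ℝ))
      (dirDeriv (EuclideanSpace.single i (1 : ℝ)) a) x := by
  refine Finset.sum_congr rfl fun i _ => ?_
  have ha1 : Differentiable ℝ a := ha.differentiable (by simp)
  have ha2 : Differentiable ℝ (dirDeriv (EuclideanSpace.single i (1 : ℝ)) a) := fun y =>
    (ContDiffAt.dirDeriv (k := 1) ha.contDiffAt _).differentiableAt (by simp)
  have h1 : deriv (fun s : ℝ => a (x + s • EuclideanSpace.single i (1 : ℝ)))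
      = fun s => dirDeriv (EuclideanSpace.single i (1 : ℝ)) a
        (x + s • EuclideanSpace.single i (1 : ℝ)) :=
    funext fun s => (ha1 _).hasDerivAt_line.deriv
  rw [iteratedDeriv_succ', iteratedDeriv_one, h1, (ha2 _).hasDerivAt_line.deriv]
  simp

lemma sum_dirDeriv_slice {F : X × ℝ → ℝ} {τ : ℝ} (hF : ∀ x, ContDiffAt ℝ 2 F (x, τ)) (x : X) :
    ∑ i, dirDeriv (EuclideanSpace.single i (1 : ℝ))
      (dirDeriv (EuclideanSpace.single i (1 : ℝ)) (fun z => F (z, τ))) x = lapSpace F (x, τ) := by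
  refine Finset.sum_congr rfl fun i _ => ?_
  have h1 : dirDeriv (EuclideanSpace.single i (1 : ℝ)) (fun z => F (z, τ))
      = fun z => dspace i F (z, τ) :=
    funext fun z => DifferentiableAt.dirDeriv_slice i ((hF z).differentiableAt (by simp))
  rw [h1]
  exact DifferentiableAt.dirDeriv_slice i
    ((ContDiffAt.dirDeriv (k := 1) (hF x) _).differentiableAt (by simp))

lemma integral_dirDeriv_dirDeriv_mul {a w : X → ℝ} (ha : ContDiff ℝ 2 a) (hw : ContDiff ℝ 2 w)
    (hwc : HasCompactSupport w) (e : X) :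
    ∫ x, dirDeriv e (dirDeriv e a) x * w x = ∫ x, a x * dirDeriv e (dirDeriv e w) x := by
  have ha1 : ContDiff ℝ 1 (dirDeriv e a) := contDiff_iff_contDiffAt.2 fun x =>
    ContDiffAt.dirDeriv (k := 1) ha.contDiffAt e
  have hw1 : ContDiff ℝ 1 (dirDeriv e w) := contDiff_iff_contDiffAt.2 fun x =>
    ContDiffAt.dirDeriv (k := 1) hw.contDiffAt e
  have ha2 : Continuous (dirDeriv e (dirDeriv e a)) := continuous_iff_continuousAt.2 fun x =>
    (ContDiffAt.dirDeriv (k := 0) (by simpa using ha1.contDiffAt) e).continuousAt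
  have hw2 : Continuous (dirDeriv e (dirDeriv e w)) := continuous_iff_continuousAt.2 fun x =>
    (ContDiffAt.dirDeriv (k := 0) (by simpa using hw1.contDiffAt) e).continuousAt
  have hwc1 : HasCompactSupport (dirDeriv e w) := hwc.fderiv_apply (𝕜 := ℝ) e
  have hwc2 : HasCompactSupport (dirDeriv e (dirDeriv e w)) := hwc1.fderiv_apply (𝕜 := ℝ) e
  have hint : ∀ {p q : X → ℝ}, Continuous p → Continuous q → HasCompactSupport q →
      Integrable (fun x => p x * q x) := fun hp hq hqc =>
    (hp.mul hq).integrable_of_hasCompactSupport hqc.mul_left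
  have h1 := integral_mul_fderiv_eq_neg_fderiv_mul_of_integrable (μ := volume) (f := dirDeriv e a)
    (g := w) (v := e) (hint ha2 hw.continuous hwc) (hint ha1.continuous hw1.continuous hwc1)
    (hint ha1.continuous hw.continuous hwc) (fun x _ => ha1.differentiable (by simp) x)
    (fun x _ => hw.differentiable (by simp) x)
  have h2 := integral_mul_fderiv_eq_neg_fderiv_mul_of_integrable (μ := volume) (f := a)
    (g := dirDeriv e w) (v := e) (hint ha1.continuous hw1.continuous hwc1)
    (hint ha.continuous hw2 hwc2)
    (hint ha.continuous hw1.continuous hwc1) (fun x _ => ha.differentiable (by simp) x)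
    (fun x _ => hw1.differentiable (by simp) x)
  change ∫ x, fderiv ℝ (dirDeriv e a) x e * w x = ∫ x, a x * fderiv ℝ (dirDeriv e w) x e
  rw [h2, ← neg_eq_iff_eq_neg.2 h1]
  rfl

lemma integral_lapSpace_mul {F v : X × ℝ → ℝ} {t τ : ℝ} (hF : ∀ x, ContDiffAt ℝ 2 F (x, t))
    (hv : ContDiff ℝ (⊤ : ℕ∞) v) (hvc : HasCompactSupport fun x => v (x, τ)) :
    ∫ x, lapSpace F (x, t) * v (x, τ) = ∫ x, F (x, t) * lapSpace v (x, τ) := by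
  have hF2 : ContDiff ℝ 2 (fun x => F (x, t)) := contDiff_iff_contDiffAt.2 fun x =>
    (hF x).comp x (contDiffAt_id.prodMk contDiffAt_const)
  have hv2 : ContDiff ℝ 2 v := hv.of_le (WithTop.coe_le_coe.2 (le_top : (2 : ℕ∞) ≤ ⊤))
  have hw2 : ContDiff ℝ 2 (fun x => v (x, τ)) := hv2.comp (contDiff_id.prodMk contDiff_const)
  have hd : ∀ {a : X → ℝ}, ContDiff ℝ 2 a → ∀ e, Continuous (dirDeriv e (dirDeriv e a)) := by
    intro a ha e
    refine continuous_iff_continuousAt.2 fun x =>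
      (ContDiffAt.dirDeriv (k := 0) ?_ e).continuousAt
    exact ContDiffAt.dirDeriv (k := 1) ha.contDiffAt e
  simp only [← sum_dirDeriv_slice hF, ← sum_dirDeriv_slice fun x => hv2.contDiffAt (x := (x, τ)),
    Finset.sum_mul, Finset.mul_sum]
  rw [integral_finsetSum, integral_finsetSum]
  · exact Finset.sum_congr rfl fun i _ => integral_dirDeriv_dirDeriv_mul hF2 hw2 hvc _
  · intro i _
    exact (hF2.continuous.mul (hd hw2 _)).integrable_of_hasCompactSupport
      ((hvc.fderiv_apply (𝕜 := ℝ) _).fderiv_apply (𝕜 := ℝ) _).mul_left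
  · intro i _
    exact ((hd hF2 _).mul hw2.continuous).integrable_of_hasCompactSupport hvc.mul_left

end GreenIdentity

section DampedWave

local notation "X" => EuclideanSpace ℝ (Fin n)

/-- The time derivative, one-sided at time zero. -/
def dtimeWithin (F : X × ℝ → ℝ) (p : X × ℝ) : ℝ :=
  fderivWithin ℝ F (univ ×ˢ Ici 0) p (0, 1)

lemma uniqueDiffOn_univ_prod_Ici : UniqueDiffOn ℝ ((univ : Set X) ×ˢ Ici (0 : ℝ)) :=
  uniqueDiffOn_univ.prod (uniqueDiffOn_Ici 0)

lemma univ_prod_Ici_mem_nhds {p : X × ℝ} (hp : 0 < p.2) :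
    (univ : Set X) ×ˢ Ici (0 : ℝ) ∈ 𝓝 p :=
  prod_mem_nhds univ_mem (Ici_mem_nhds hp)

lemma dtimeWithin_eq_dtime (F : X × ℝ → ℝ) {p : X × ℝ} (hp : 0 < p.2) :
    dtimeWithin F p = dtime F p := by
  rw [dtimeWithin, fderivWithin_of_mem_nhds (univ_prod_Ici_mem_nhds hp)]
  rfl

lemma continuousOn_dtimeWithin {F : X × ℝ → ℝ} (hF : ContDiffOn ℝ 2 F (univ ×ˢ Ici 0)) :
    ContinuousOn (dtimeWithin F) (univ ×ˢ Ici 0) :=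
  (hF.continuousOn_fderivWithin uniqueDiffOn_univ_prod_Ici (by norm_num)).clm_apply
    continuousOn_const

lemma dtimeWithin_zero {u : X → ℝ → ℝ}
    (hu : ContDiffOn ℝ 2 (fun p : X × ℝ => u p.1 p.2) (univ ×ˢ Ici 0)) (x : X) :
    dtimeWithin (fun p : X × ℝ => u p.1 p.2) (x, 0) = derivWithin (fun s => u x s) (Ici 0) 0 := by
  have h1 : HasFDerivWithinAt (fun p : X × ℝ => u p.1 p.2) _ (univ ×ˢ Ici 0) (x, (0 : ℝ)) :=
    (hu.differentiableOn (by simp) (x, 0) ⟨mem_univ _, self_mem_Ici⟩).hasFDerivWithinAt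
  have h2 : HasDerivWithinAt (fun s : ℝ => (x, s)) ((0 : X), (1 : ℝ)) (Ici 0) 0 :=
    ((hasDerivAt_const (0 : ℝ) x).prodMk (hasDerivAt_id (0 : ℝ))).hasDerivWithinAt
  have h3 := h1.comp_hasDerivWithinAt (0 : ℝ) h2 fun s hs => ⟨mem_univ _, hs⟩
  exact (HasDerivWithinAt.derivWithin h3 (uniqueDiffOn_Ici (0 : ℝ) 0 self_mem_Ici)).symm

lemma damped_wave_pointwise {u : X → ℝ → ℝ}
    (hu : ContDiffOn ℝ 2 (fun p : X × ℝ => u p.1 p.2) (univ ×ˢ Ici 0)) {x : X} {t : ℝ} (ht : 0 < t)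
    (hpde : deriv (deriv (fun s => u x s)) t - lap (fun z => u z t) x
        + deriv (fun s => u x s) t = 0) :
    dtime (dtime fun p : X × ℝ => u p.1 p.2) (x, t) - lapSpace (fun p : X × ℝ => u p.1 p.2) (x, t)
      + dtime (fun p : X × ℝ => u p.1 p.2) (x, t) = 0 := by
  set F : X × ℝ → ℝ := fun p => u p.1 p.2 with hFdef
  have hF : ∀ p : X × ℝ, 0 < p.2 → ContDiffAt ℝ 2 F p := fun p hp =>
    hu.contDiffAt (univ_prod_Ici_mem_nhds hp)
  have h1 : ∀ s, 0 < s → HasDerivAt (fun s => u x s) (dtime F (x, s)) s := fun s hs =>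
    DifferentiableAt.hasDerivAt_dtime (F := F) ((hF (x, s) hs).differentiableAt (by simp))
  have h2 : deriv (deriv (fun s => u x s)) t = dtime (dtime F) (x, t) := by
    have hev : deriv (fun s => u x s) =ᶠ[𝓝 t] fun s => dtime F (x, s) := by
      filter_upwards [lt_mem_nhds ht] with s hs using (h1 s hs).deriv
    rw [hev.deriv_eq]
    exact (DifferentiableAt.hasDerivAt_dtime (F := dtime F)
      ((ContDiffAt.dirDeriv (k := 1) (hF (x, t) ht) _).differentiableAt (by simp))).deriv
  have h3 : ContDiff ℝ 2 (fun z => u z t) := contDiff_iff_contDiffAt.2 fun z =>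
    (hF (z, t) ht).comp z (contDiffAt_id.prodMk contDiffAt_const)
  have h4 : lap (fun z => u z t) x = lapSpace F (x, t) := by
    rw [lap_eq_sum_dirDeriv h3]
    exact sum_dirDeriv_slice (F := F) (fun z => hF (z, t) ht) x
  rw [h2, h4, (h1 t ht).deriv] at hpde
  exact hpde

lemma green_identity {F v : X × ℝ → ℝ} (hF : ContDiffOn ℝ 2 F (univ ×ˢ Ici 0))
    (hpde : ∀ x, ∀ t > 0, dtime (dtime F) (x, t) - lapSpace F (x, t) + dtime F (x, t) = 0)
    (hv : ContDiff ℝ (⊤ : ℕ∞) v) (hwave : ∀ p, 0 < p.2 → dtime (dtime v) p = lapQuarter v p)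
    {R : ℝ} (hR : ∀ p : X × ℝ, R + |p.2| < ‖p.1‖ → v p = 0) (hv0 : ∀ x, v (x, 0) = 0)
    {T : ℝ} (hT : 0 < T) :
    exp (T / 2) * ∫ x, F (x, T) * dtime v (x, 0)
      = ∫ x, ((dtimeWithin F (x, 0) + F (x, 0) / 2) * v (x, T) + F (x, 0) * dtime v (x, T)) := by
  set K : Set X := closedBall 0 (R + T) with hK
  have hKc : IsCompact K := isCompact_closedBall _ _
  have hout : ∀ x ∉ K, ∀ t ∈ Icc 0 T, R + |T - t| < ‖x‖ := by
    intro x hx t ht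
    rw [hK, mem_closedBall_zero_iff, not_le] at hx
    rw [abs_of_nonneg (by linarith [ht.2])]
    linarith [ht.1]
  have hvout : ∀ x ∉ K, ∀ t ∈ Icc 0 T, v (x, T - t) = 0 := fun x hx t ht =>
    hR (x, T - t) (hout x hx t ht)
  have hdvout : ∀ x ∉ K, ∀ t ∈ Icc 0 T, dtime v (x, T - t) = 0 := fun x hx t ht =>
    dtime_eq_zero_of_forall hR (x, T - t) (hout x hx t ht)
  have hdv : ContDiff ℝ (⊤ : ℕ∞) (dtime v) := hv.dirDeriv _
  have hddv : ContDiff ℝ (⊤ : ℕ∞) (dtime (dtime v)) := hdv.dirDeriv _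
  have hflip : Continuous fun q : ℝ × X => (q.2, T - q.1) := by fun_prop
  have hvc := hv.continuous.comp hflip
  have hdvc := hdv.continuous.comp hflip
  have hddvc := hddv.continuous.comp hflip
  set e : ℝ → X → ℝ := fun t x =>
    (dtimeWithin F (x, t) + F (x, t) / 2) * v (x, T - t) + F (x, t) * dtime v (x, T - t) with he
  have hezero : ∀ t, ∀ x, t ∈ Icc 0 T → x ∉ K → e t x = 0 := by
    intro t x ht hx
    simp only [he, hvout x hx t ht, hdvout x hx t ht, mul_zero, add_zero]
  have hecont : ContinuousOn (Function.uncurry e) (Icc 0 T ×ˢ univ) := by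
    have hmaps : MapsTo (fun q : ℝ × X => (q.2, q.1)) (Icc 0 T ×ˢ univ) (univ ×ˢ Ici 0) :=
      fun q hq => ⟨mem_univ _, hq.1.1⟩
    have h1 : ContinuousOn (fun q : ℝ × X => F (q.2, q.1)) (Icc 0 T ×ˢ univ) :=
      hF.continuousOn.comp (by fun_prop) hmaps
    have h2 : ContinuousOn (fun q : ℝ × X => dtimeWithin F (q.2, q.1)) (Icc 0 T ×ˢ univ) :=
      (continuousOn_dtimeWithin hF).comp (by fun_prop) hmaps
    exact ((h2.add (h1.div_const 2)).mul hvc.continuousOn).add (h1.mul hdvc.continuousOn)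
  have hEcont : ContinuousOn (fun t => exp (t / 2) * ∫ x, e t x) (Icc 0 T) :=
    ContinuousOn.mul (by fun_prop)
      (continuousOn_integral_of_compact_support hKc hecont fun t x => hezero t x)
  have hF2 : ∀ p : X × ℝ, 0 < p.2 → ContDiffAt ℝ 2 F p := fun p hp =>
    hF.contDiffAt (univ_prod_Ici_mem_nhds hp)
  have hder : ∀ t ∈ Ioo 0 T, HasDerivAt (fun t => exp (t / 2) * ∫ x, e t x) 0 t := by
    intro t ht
    set d : ℝ → X → ℝ := fun t x => (dtime F (x, t) + F (x, t) / 2) * v (x, T - t)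
      + F (x, t) * dtime v (x, T - t) with hd
    set d' : ℝ → X → ℝ := fun t x =>
      (dtime (dtime F) (x, t) + dtime F (x, t) / 2) * v (x, T - t)
        + (dtime F (x, t) + F (x, t) / 2) * (-dtime v (x, T - t))
        + (dtime F (x, t) * dtime v (x, T - t) + F (x, t) * (-dtime (dtime v) (x, T - t))) with hd'
    have hmem : ∀ s ∈ Ioo 0 T, s ∈ Icc 0 T := fun s hs => Ioo_subset_Icc_self hs
    have hed : ∀ s ∈ Ioo 0 T, ∫ x, e s x = ∫ x in K, d s x := by
      intro s hs
      rw [setIntegral_eq_integral_of_forall_compl_eq_zero]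
      · simp only [he, hd, dtimeWithin_eq_dtime F (p := (_, s)) hs.1]
      · intro x hx
        simp only [hd, hvout x hx s (hmem s hs), hdvout x hx s (hmem s hs), mul_zero, add_zero]
    have hF0 : ∀ q : ℝ × X, q.1 ∈ Ioo 0 T → ContinuousAt F (q.2, q.1) := fun q hq =>
      (hF2 (q.2, q.1) hq.1).continuousAt
    have hF1 : ∀ q : ℝ × X, q.1 ∈ Ioo 0 T → ContDiffAt ℝ 1 (dtime F) (q.2, q.1) := fun q hq =>
      ContDiffAt.dirDeriv (k := 1) (hF2 (q.2, q.1) hq.1) _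
    have hF1' : ∀ q : ℝ × X, q.1 ∈ Ioo 0 T → ContinuousAt (dtime (dtime F)) (q.2, q.1) :=
      fun q hq => (ContDiffAt.dirDeriv (k := 0) (hF1 q hq) _).continuousAt
    have hc : ∀ {H : X × ℝ → ℝ}, (∀ q : ℝ × X, q.1 ∈ Ioo 0 T → ContinuousAt H (q.2, q.1)) →
        ContinuousOn (fun q : ℝ × X => H (q.2, q.1)) (Ioo 0 T ×ˢ univ) := fun hH q hq =>
      ((hH q hq.1).comp (f := fun q : ℝ × X => (q.2, q.1)) (by fun_prop)).continuousWithinAt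
    have hc0 := hc hF0
    have hc1 := hc fun q hq => (hF1 q hq).continuousAt
    have hc2 := hc hF1'
    have hdc : ContinuousOn (Function.uncurry d) (Ioo 0 T ×ˢ univ) :=
      ((hc1.add (hc0.div_const 2)).mul hvc.continuousOn).add (hc0.mul hdvc.continuousOn)
    have hdc' : ContinuousOn (Function.uncurry d') (Ioo 0 T ×ˢ univ) :=
      (((hc2.add (hc1.div_const 2)).mul hvc.continuousOn).add
        ((hc1.add (hc0.div_const 2)).mul hdvc.neg.continuousOn)).add
        ((hc1.mul hdvc.continuousOn).add (hc0.mul hddvc.neg.continuousOn))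
    have hint := hasDerivAt_setIntegral_of_isCompact (μ := volume) hKc (F := d) (F' := d')
      (S := Ioo 0 T) isOpen_Ioo
      (fun s hs => hdc.comp (f := fun x => (s, x)) (by fun_prop) fun x _ => ⟨hs, mem_univ _⟩)
      (hdc'.mono (prod_mono subset_rfl (subset_univ _)))
      (fun s hs x _ => by
        have a0 := DifferentiableAt.hasDerivAt_dtime (F := F) (x := x) (τ := s)
          ((hF2 (x, s) hs.1).differentiableAt (by simp))
        have a1 := DifferentiableAt.hasDerivAt_dtime (F := dtime F) (x := x) (τ := s)
          ((hF1 (s, x) hs).differentiableAt (by simp))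
        have b0 := (hasDerivAt_dtime hv x (T - s)).comp_const_sub T s
        have b1 := (hasDerivAt_dtime hdv x (T - s)).comp_const_sub T s
        exact ((a1.add (a0.div_const 2)).mul b0).add (a0.mul b1)) ht
    have hE := ((((hasDerivAt_id t).div_const 2).exp.mul hint).congr_of_eventuallyEq (f₁ :=
        fun t => exp (t / 2) * ∫ x, e t x) (by
      filter_upwards [isOpen_Ioo.mem_nhds ht] with s hs
      simp only [Pi.mul_apply, id, hed s hs]))
    refine hE.congr_deriv ?_
    have hsupp : HasCompactSupport fun x => v (x, T - t) :=
      HasCompactSupport.intro hKc fun x hx => hvout x hx t (hmem t ht)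
    have hgreen := integral_lapSpace_mul (F := F) (t := t) (τ := T - t)
      (fun x => hF2 (x, t) ht.1) hv hsupp
    have hvanish : ∀ x ∉ K, lapSpace v (x, T - t) = 0 := by
      intro x hx
      have h1 : ∀ i : Fin n, ∀ H : X × ℝ → ℝ, (∀ q : X × ℝ, R + |q.2| < ‖q.1‖ → H q = 0) →
          ∀ q : X × ℝ, R + |q.2| < ‖q.1‖ → dspace i H q = 0 := by
        intro i H hH q hq
        refine dirDeriv_eq_zero_of_eventuallyEq _ ?_
        have ho : IsOpen {p : X × ℝ | R + |p.2| < ‖p.1‖} := isOpen_lt (by fun_prop) (by fun_prop)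
        filter_upwards [ho.mem_nhds hq] with p hp using hH p hp
      exact Finset.sum_eq_zero fun i _ =>
        h1 i _ (h1 i _ hR) _ (hout x hx t (hmem t ht))
    have hpt : ∀ x, d t x / 2 + d' t x = lapSpace F (x, t) * v (x, T - t)
        - F (x, t) * lapSpace v (x, T - t) := by
      intro x
      have h1 := hpde x t ht.1
      have h2 := hwave (x, T - t) (by simpa using ht.2)
      simp only [lapQuarter] at h2
      simp only [hd, hd', h2, lapSpace] at h1 ⊢
      linear_combination v (x, T - t) * h1
    have hint1 : IntegrableOn (d t) K := ContinuousOn.integrableOn_compact hKc <|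
      hdc.comp (f := fun x => (t, x)) (by fun_prop) fun x _ => ⟨ht, mem_univ _⟩
    have hint2 : IntegrableOn (d' t) K := ContinuousOn.integrableOn_compact hKc <|
      hdc'.comp (f := fun x => (t, x)) (by fun_prop) fun x _ => ⟨ht, mem_univ _⟩
    have hsum : (∫ x in K, d t x) / 2 + ∫ x in K, d' t x = 0 := by
      rw [← integral_div, ← integral_add (hint1.div_const 2) hint2]
      simp only [hpt]
      have hds : ∀ {H : X × ℝ → ℝ} {s : ℝ}, (∀ x, ContDiffAt ℝ 2 H (x, s)) →
          Continuous fun x => lapSpace H (x, s) := by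
        intro H s hH
        refine continuous_finsetSum _ fun i _ => continuous_iff_continuousAt.2 fun x => ?_
        exact (ContDiffAt.dirDeriv (k := 0)
          (ContDiffAt.dirDeriv (k := 1) (hH x) _) _).continuousAt.comp
          (f := fun x => (x, s)) (by fun_prop)
      have hv2 : ContDiff ℝ 2 v := hv.of_le (WithTop.coe_le_coe.2 (le_top : (2 : ℕ∞) ≤ ⊤))
      have hFc : Continuous fun x => F (x, t) := continuous_iff_continuousAt.2 fun x =>
        (hF2 (x, t) ht.1).continuousAt.comp (f := fun x => (x, t)) (by fun_prop)
      have hl1 := hds (H := F) (s := t) fun x => hF2 (x, t) ht.1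
      have hl2 := hds (H := v) (s := T - t) fun x => hv2.contDiffAt
      rw [integral_sub, setIntegral_eq_integral_of_forall_compl_eq_zero,
        setIntegral_eq_integral_of_forall_compl_eq_zero, hgreen, sub_self]
      · intro x hx
        rw [hvanish x hx, mul_zero]
      · intro x hx
        rw [hvout x hx t (hmem t ht), mul_zero]
      · exact (hl1.mul (hv.continuous.comp (by fun_prop))).continuousOn.integrableOn_compact hKc
      · exact (hFc.mul hl2).continuousOn.integrableOn_compact hKc
    simp only [id]
    linear_combination exp (t / 2) * hsum
  obtain ⟨c, hc, hslope⟩ := exists_hasDerivAt_eq_slope _ (fun _ => 0) hT hEcont hder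
  have hends := (div_eq_zero_iff.1 hslope.symm).resolve_right (by linarith)
  simp only [he, sub_self, sub_zero, hv0, mul_zero, zero_add, zero_div, exp_zero, one_mul] at hends
  linarith

end DampedWave

section Representation

local notation "X" => EuclideanSpace ℝ (Fin n)

lemma continuousAt_kernelPhi_mul {b t : ℝ} {f : X → ℝ} (hf : Continuous f) {p : X × X}
    (hp : p.2 ∈ tsupport f → 0 < t ^ 2 - ‖p.1 - p.2‖ ^ 2) :
    ContinuousAt (fun q : X × X => kernelPhi b (t ^ 2 - ‖q.1 - q.2‖ ^ 2) * f q.2) p := by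
  by_cases h : p.2 ∈ tsupport f
  · refine ContinuousAt.mul ?_ (by fun_prop)
    exact ContinuousAt.comp (f := fun q : X × X => t ^ 2 - ‖q.1 - q.2‖ ^ 2)
      (continuousAt_kernelPhi_of_pos (hp h)) (by fun_prop)
  · refine continuousAt_const.congr (f := fun _ => (0 : ℝ)) ?_
    have h1 : ∀ᶠ q : X × X in 𝓝 p, f q.2 = (0 : X → ℝ) q.2 :=
      continuous_snd.continuousAt.eventually (notMem_tsupport_iff_eventuallyEq.mp h)
    filter_upwards [h1] with q hq
    simp [hq]

lemma continuousOn_potential {b t : ℝ} {f : X → ℝ} (hf : Continuous f) (hfc : HasCompactSupport f)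
    {O : Set X} (hO : ∀ x ∈ O, ∀ z ∈ tsupport f, 0 < t ^ 2 - ‖x - z‖ ^ 2) :
    ContinuousOn (fun x => potential b f (x, t)) O := by
  refine continuousOn_integral_of_compact_support (k := tsupport f)
    (f := fun x z => kernelPhi b (t ^ 2 - ‖x - z‖ ^ 2) * f z) hfc ?_ ?_
  · intro p hp
    exact (continuousAt_kernelPhi_mul hf fun h => hO p.1 hp.1 p.2 h).continuousWithinAt
  · intro p x _ hx
    simp [image_eq_zero_of_notMem_tsupport hx]

lemma integral_mul_potential_comm {b t : ℝ} {f χ : X → ℝ} (hf : Continuous f)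
    (hfc : HasCompactSupport f) (hχ : Continuous χ) (hχc : HasCompactSupport χ)
    (hpos : ∀ x ∈ tsupport f, ∀ z ∈ tsupport χ, 0 < t ^ 2 - ‖x - z‖ ^ 2) :
    ∫ x, f x * potential b χ (x, t) = ∫ z, χ z * potential b f (z, t) := by
  have hsupp : tsupport (Function.uncurry fun x z : X =>
      f x * (kernelPhi b (t ^ 2 - ‖x - z‖ ^ 2) * χ z)) ⊆ tsupport f ×ˢ tsupport χ := by
    refine closure_minimal ?_ ((isClosed_tsupport f).prod (isClosed_tsupport χ))
    rintro ⟨x, z⟩ hxz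
    simp only [Function.mem_support, Function.uncurry, ne_eq, mul_eq_zero, not_or] at hxz
    exact ⟨subset_tsupport f hxz.1, subset_tsupport χ hxz.2.2⟩
  have hcont : Continuous (Function.uncurry fun x z : X =>
      f x * (kernelPhi b (t ^ 2 - ‖x - z‖ ^ 2) * χ z)) := by
    refine continuous_of_tsupport fun p hp => ?_
    refine ContinuousAt.mul (f := fun q : X × X => f q.1) (by fun_prop)
      (continuousAt_kernelPhi_mul hχ fun h => hpos p.1 (hsupp hp).1 p.2 h)
  have hcs : HasCompactSupport (Function.uncurry fun x z : X =>
      f x * (kernelPhi b (t ^ 2 - ‖x - z‖ ^ 2) * χ z)) :=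
    (hfc.prod hχc).of_isClosed_subset (isClosed_tsupport _) hsupp
  have := integral_integral_swap_of_hasCompactSupport hcont hcs (μ := volume) (ν := volume)
  simp only [potential]
  simp only [← integral_const_mul]
  rw [this]
  refine integral_congr_ae (Eventually.of_forall fun z =>
    integral_congr_ae (Eventually.of_forall fun x => ?_))
  simp only [norm_sub_rev x z]
  ring

/-- The solution of the damped wave equation through the kernel, at times when the base of the
backward light cone covers the support of the data. -/
def kernelSolution (f g : X → ℝ) (p : X × ℝ) : ℝ :=
  potential ((1 - n) / 2) (fun y => g y + f y / 2) p
    + 2 * p.2 * potential ((1 - n) / 2 - 1) f p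

lemma integrable_mul_of_continuousOn {χ w : X → ℝ} {O : Set X} (hχ : Continuous χ)
    (hχc : HasCompactSupport χ) (hO : IsOpen O) (hχO : tsupport χ ⊆ O) (hw : ContinuousOn w O) :
    Integrable (fun x => χ x * w x) := by
  refine Continuous.integrable_of_hasCompactSupport (continuous_of_tsupport fun x hx => ?_)
    hχc.mul_right
  exact hχ.continuousAt.mul
    (hw.continuousAt (hO.mem_nhds (hχO (tsupport_mul_subset_left hx))))

lemma sub_norm_sq_pos {z₀ x z : X} {r t : ℝ} (hx : x ∈ closedBall z₀ r)
    (hz : z ∈ ball z₀ ((t - r) / 2)) : 0 < t ^ 2 - ‖x - z‖ ^ 2 := by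
  have h1 := dist_triangle_right x z z₀
  rw [mem_closedBall] at hx
  rw [mem_ball] at hz
  rw [dist_eq_norm x z] at h1
  have := norm_nonneg (x - z)
  have : dist z z₀ ≥ 0 := dist_nonneg
  nlinarith

lemma exists_kernelSolution (n : ℕ) : ∃ c : ℝ, 0 < c ∧ ∀ (f g : EuclideanSpace ℝ (Fin n) → ℝ)
    (u : EuclideanSpace ℝ (Fin n) → ℝ → ℝ), Continuous f → Continuous g →
    ContDiffOn ℝ 2 (fun p : EuclideanSpace ℝ (Fin n) × ℝ => u p.1 p.2) (univ ×ˢ Ici 0) →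
    (∀ x, ∀ t > (0 : ℝ), deriv (deriv (fun s => u x s)) t - lap (fun z => u z t) x
        + deriv (fun s => u x s) t = 0) →
    (∀ x, u x 0 = f x) → (∀ x, derivWithin (fun s => u x s) (Ici 0) 0 = g x) →
    ∀ z₀ r t, 0 ≤ r → r < t → tsupport f ⊆ closedBall z₀ r → tsupport g ⊆ closedBall z₀ r →
    ∀ z ∈ ball z₀ ((t - r) / 2), c * exp (t / 2) * u z t = kernelSolution f g (z, t) := by
  obtain ⟨c, hc, hwave⟩ := exists_wave_solution n
  refine ⟨c, hc, fun f g u hf hg hu hpde hu0 hu1 z₀ r t hr hrt hfs hgs => ?_⟩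
  set O : Set (EuclideanSpace ℝ (Fin n)) := ball z₀ ((t - r) / 2) with hO
  have ht : 0 < t := hr.trans_lt hrt
  have hB : IsCompact (closedBall z₀ r) := isCompact_closedBall z₀ r
  have hfc : HasCompactSupport f := hB.of_isClosed_subset (isClosed_tsupport f) hfs
  set g' : EuclideanSpace ℝ (Fin n) → ℝ := fun y => g y + f y / 2 with hg'
  have hg'c : Continuous g' := by fun_prop
  have hf0 : ∀ x ∉ closedBall z₀ r, f x = 0 := fun x hx =>
    image_eq_zero_of_notMem_tsupport fun h => hx (hfs h)
  have hg'0 : ∀ x ∉ closedBall z₀ r, g' x = 0 := fun x hx => by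
    simp [hg', hf0 x hx, image_eq_zero_of_notMem_tsupport fun h => hx (hgs h)]
  have hg's : tsupport g' ⊆ closedBall z₀ r :=
    closure_minimal (fun x hx => by_contra fun h => hx (hg'0 x h)) isClosed_closedBall
  have hg'k : HasCompactSupport g' := hB.of_isClosed_subset (isClosed_tsupport g') hg's
  have hcone : ∀ x ∈ closedBall z₀ r, ∀ z ∈ O, 0 < t ^ 2 - ‖x - z‖ ^ 2 := fun x hx z hz =>
    sub_norm_sq_pos hx hz
  have hpot : ∀ {b : ℝ} {a : EuclideanSpace ℝ (Fin n) → ℝ}, Continuous a →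
      tsupport a ⊆ closedBall z₀ r → ContinuousOn (fun x => potential b a (x, t)) O :=
    fun ha has => continuousOn_potential ha (hB.of_isClosed_subset (isClosed_tsupport _) has)
      fun x hx z hz => by rw [norm_sub_rev]; exact hcone z (has hz) x hx
  have hut : Continuous fun x => u x t := by
    have := hu.continuousOn.comp_continuous (f := fun x => (x, t)) (by fun_prop)
      fun x => ⟨mem_univ _, ht.le⟩
    exact this
  have huO : ContinuousOn (fun z => c * exp (t / 2) * u z t) O := by fun_prop
  have hkO : ContinuousOn (fun z => kernelSolution f g (z, t)) O :=
    (hpot hg'c hg's).add ((hpot hf hfs).const_mul (2 * t))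
  refine Measure.eqOn_open_of_ae_eq (μ := volume) ?_ isOpen_ball huO hkO
  have key := isOpen_ball.ae_eq_zero_of_integral_contDiff_smul_eq_zero (μ := volume) (U := O)
    ((huO.sub hkO).locallyIntegrableOn measurableSet_ball) ?_
  · refine (ae_restrict_iff' measurableSet_ball).mpr ?_
    filter_upwards [key] with x hx hxO
    exact sub_eq_zero.mp (hx hxO)
  intro χ hχ hχc hχO
  obtain ⟨v, hv, hvw, hv0, hv1, hvR, hvr⟩ := hwave χ hχ hχc
  obtain ⟨R, hR⟩ : ∃ R, ∀ z, R < ‖z‖ → χ z = 0 := by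
    obtain ⟨R, hR⟩ := hχc.isBounded.exists_norm_le
    exact ⟨R, fun z hz => image_eq_zero_of_notMem_tsupport fun h => (hR z h).not_gt hz⟩
  have hgreen := green_identity hu (fun x s hs => damped_wave_pointwise hu hs (hpde x s hs)) hv hvw (hvR R hR) hv0 ht
  simp only [dtimeWithin_zero hu, hu0, hu1, hv1] at hgreen
  have hin : ∀ x ∈ closedBall z₀ r, v (x, t) = potential ((1 - n) / 2) χ (x, t) ∧
      dtime v (x, t) = 2 * t * potential ((1 - n) / 2 - 1) χ (x, t) := by
    intro x hx
    refine hvr x ((t + r) / 2) (by linarith) (fun z hz => ?_) t (by linarith)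
    have h1 := dist_triangle_right x z z₀
    have h2 := mem_ball.mp (hχO hz)
    have h3 := mem_closedBall.mp hx
    rw [← dist_eq_norm]
    linarith
  have hvI : Integrable fun x => g' x * v (x, t) :=
    Continuous.integrable_of_hasCompactSupport (hg'c.mul (hv.continuous.comp (by fun_prop)))
      hg'k.mul_right
  have hdvI : Integrable fun x => f x * dtime v (x, t) :=
    Continuous.integrable_of_hasCompactSupport
      (hf.mul ((hv.dirDeriv _).continuous.comp (by fun_prop))) hfc.mul_right
  have hpos : ∀ {a : EuclideanSpace ℝ (Fin n) → ℝ}, tsupport a ⊆ closedBall z₀ r →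
      ∀ x ∈ tsupport a, ∀ z ∈ tsupport χ, 0 < t ^ 2 - ‖x - z‖ ^ 2 :=
    fun ha x hx z hz => hcone x (ha hx) z (hχO hz)
  rw [integral_add hvI hdvI] at hgreen
  have h1 : ∫ x, g' x * v (x, t) = ∫ z, χ z * potential ((1 - n) / 2) g' (z, t) := by
    rw [← integral_mul_potential_comm hg'c hg'k hχ.continuous hχc (hpos hg's)]
    refine integral_congr_ae (Eventually.of_forall fun x => ?_)
    by_cases hx : x ∈ closedBall z₀ r
    · simp only [(hin x hx).1]
    · simp only [hg'0 x hx, zero_mul]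
  have h2 : ∫ x, f x * dtime v (x, t)
      = 2 * t * ∫ z, χ z * potential ((1 - n) / 2 - 1) f (z, t) := by
    rw [← integral_mul_potential_comm hf hfc hχ.continuous hχc (hpos hfs), ← integral_const_mul]
    refine integral_congr_ae (Eventually.of_forall fun x => ?_)
    by_cases hx : x ∈ closedBall z₀ r
    · simp only [(hin x hx).2]
      ring
    · simp only [hf0 x hx, zero_mul, mul_zero]
  have i1 := integrable_mul_of_continuousOn hχ.continuous hχc isOpen_ball hχO
    (hpot (b := (1 - n) / 2) hg'c hg's)
  have i2 := integrable_mul_of_continuousOn hχ.continuous hχc isOpen_ball hχO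
    (hpot (b := (1 - n) / 2 - 1) hf hfs)
  have i3 := integrable_mul_of_continuousOn hχ.continuous hχc isOpen_ball hχO hut.continuousOn
  have e1 : (fun x => χ x • (c * exp (t / 2) * u x t - kernelSolution f g (x, t)))
      = fun x => c * exp (t / 2) * (χ x * u x t) - (χ x * potential ((1 - n) / 2) g' (x, t)
        + 2 * t * (χ x * potential ((1 - n) / 2 - 1) f (x, t))) := by
    funext x
    simp only [kernelSolution, smul_eq_mul, hg']
    ring
  have e2 : ∫ x, u x t * (c * χ x) = c * ∫ x, χ x * u x t := by
    rw [← integral_const_mul]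
    refine integral_congr_ae (Eventually.of_forall fun x => ?_)
    simp only
    ring
  change ∫ x, χ x • (c * exp (t / 2) * u x t - kernelSolution f g (x, t)) = 0
  have i4 : Integrable fun x => χ x * potential ((1 - n) / 2) g' (x, t)
      + 2 * t * (χ x * potential ((1 - n) / 2 - 1) f (x, t)) := i1.add (i2.const_mul _)
  rw [e1, integral_sub (i3.const_mul _) i4, integral_add i1 (i2.const_mul _), integral_const_mul, integral_const_mul, ← h1, ← h2, ← hgreen,
    e2]
  ring

/-- The density of `-1/2` times the derivative of `kernelSolution f g` at `(x, t)` in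
direction `e`. -/
def gradientIntegrand (f g : X → ℝ) (t : ℝ) (x e y : X) : ℝ :=
  inner ℝ (x - y) e *
    (kernelPhi ((1 - n) / 2 - 1) (t ^ 2 - ‖x - y‖ ^ 2) * (f y + g y)
      + (2 * t * kernelPhi ((1 - n) / 2 - 1 - 1) (t ^ 2 - ‖x - y‖ ^ 2)
        - kernelPhi ((1 - n) / 2 - 1) (t ^ 2 - ‖x - y‖ ^ 2) / 2) * f y)

lemma hasDerivAt_kernelSolution {f g : X → ℝ} (hf : Continuous f) (hg : Continuous g) {x : X}
    {r t : ℝ} (hrt : r < t) (hfs : tsupport f ⊆ closedBall x r)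
    (hgs : tsupport g ⊆ closedBall x r) (e : X) :
    Integrable (gradientIntegrand f g t x e) ∧
      HasDerivAt (fun s : ℝ => kernelSolution f g (x + s • e, t))
        (-2 * ∫ y, gradientIntegrand f g t x e y) 0 := by
  have hB : IsCompact (closedBall x r) := isCompact_closedBall x r
  have hfc : HasCompactSupport f := hB.of_isClosed_subset (isClosed_tsupport f) hfs
  set g' : X → ℝ := fun y => g y + f y / 2 with hg'
  have hg'c : Continuous g' := by fun_prop
  have hg's : tsupport g' ⊆ closedBall x r := by
    refine closure_minimal (fun y hy => by_contra fun h => hy ?_) isClosed_closedBall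
    simp [hg', image_eq_zero_of_notMem_tsupport fun h' => h (hfs h'),
      image_eq_zero_of_notMem_tsupport fun h' => h (hgs h')]
  have hg'k : HasCompactSupport g' := hB.of_isClosed_subset (isClosed_tsupport g') hg's
  set S : Set ℝ := (fun s : ℝ => x + s • e) ⁻¹' ball x ((t - r) / 2) with hS
  have hSo : IsOpen S := isOpen_ball.preimage (by fun_prop)
  have h0 : (0 : ℝ) ∈ S := by
    simp only [hS, mem_preimage, zero_smul, add_zero]
    exact mem_ball_self (by linarith)
  have hcone : ∀ {a : X → ℝ}, tsupport a ⊆ closedBall x r →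
      ∀ s ∈ S, ∀ z ∈ tsupport a, 0 < t ^ 2 - ‖x + s • e - z‖ ^ 2 := fun ha s hs z hz => by
    rw [norm_sub_rev]
    exact sub_norm_sq_pos (ha hz) hs
  have d1 := hasDerivAt_potential_fst (b := (1 - n) / 2) hg'c hg'k hSo (Or.inr (hcone hg's)) h0
  have d2 := hasDerivAt_potential_fst (b := (1 - n) / 2 - 1) hf hfc hSo (Or.inr (hcone hfs)) h0
  have hI : ∀ {b : ℝ} {a : X → ℝ}, Continuous a → HasCompactSupport a →
      tsupport a ⊆ closedBall x r → Integrable fun z =>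
        kernelPhi b (t ^ 2 - ‖x - z‖ ^ 2) * -(2 * inner ℝ (x - z) e) * a z := by
    intro b a ha hac has
    refine Continuous.integrable_of_hasCompactSupport ?_ hac.mul_left
    have h1 : Continuous fun z => kernelPhi b (t ^ 2 - ‖x - z‖ ^ 2) * a z :=
      continuous_iff_continuousAt.2 fun z =>
        (continuousAt_kernelPhi_mul (p := (x, z)) ha fun h => by
          simpa using hcone has 0 h0 z h).comp (f := fun z => (x, z)) (by fun_prop)
    have h2 : Continuous fun z : X => -(2 * inner ℝ (x - z) e) := by fun_prop
    refine (h1.mul h2).congr fun z => ?_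
    simp only [Pi.mul_apply]
    ring
  have h1 := hI (b := (1 - n) / 2 - 1) hg'c hg'k hg's
  have h2 := (hI (b := (1 - n) / 2 - 1 - 1) hf hfc hfs).const_mul (2 * t)
  have hJ : ∀ y, -2 * gradientIntegrand f g t x e y =
      kernelPhi ((1 - n) / 2 - 1) (t ^ 2 - ‖x - y‖ ^ 2) * -(2 * inner ℝ (x - y) e) * g' y
      + 2 * t * (kernelPhi ((1 - n) / 2 - 1 - 1) (t ^ 2 - ‖x - y‖ ^ 2) * -(2 * inner ℝ (x - y) e)
        * f y) := fun y => by
    simp only [gradientIntegrand, hg']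
    ring
  refine ⟨?_, (d1.add (d2.const_mul (2 * t))).congr_deriv ?_⟩
  · refine ((h1.add h2).const_mul (-1 / 2)).congr (Eventually.of_forall fun y => ?_)
    simp only [Pi.add_apply, ← hJ]
    ring
  · simp only [zero_smul, add_zero]
    rw [← integral_const_mul, ← integral_const_mul, ← integral_add h1 h2]
    exact integral_congr_ae (Eventually.of_forall fun y => (hJ y).symm)

lemma integral_gradientIntegrand_eq_zero {f g : X → ℝ} {u : X → ℝ → ℝ} (hf : Continuous f)
    (hg : Continuous g)
    (hu : ContDiffOn ℝ 2 (fun p : X × ℝ => u p.1 p.2) (univ ×ˢ Ici 0))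
    (hpde : ∀ x, ∀ t > (0 : ℝ), deriv (deriv (fun s => u x s)) t - lap (fun z => u z t) x
        + deriv (fun s => u x s) t = 0)
    (hu0 : ∀ x, u x 0 = f x) (hu1 : ∀ x, derivWithin (fun s => u x s) (Ici 0) 0 = g x)
    {x : X} {r t : ℝ} (hr : 0 ≤ r) (hrt : r < t) (hfs : tsupport f ⊆ closedBall x r)
    (hgs : tsupport g ⊆ closedBall x r) (hgrad : gradient (fun z => u z t) x = 0) (e : X) :
    Integrable (gradientIntegrand f g t x e) ∧ ∫ y, gradientIntegrand f g t x e y = 0 := by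
  obtain ⟨c, -, hrep⟩ := exists_kernelSolution n
  have hux : DifferentiableAt ℝ (fun z => u z t) x :=
    DifferentiableAt.comp (g := fun p : X × ℝ => u p.1 p.2) (f := fun z => (z, t)) x
      ((hu.contDiffAt (univ_prod_Ici_mem_nhds (hr.trans_lt hrt))).differentiableAt (by simp))
      (by fun_prop)
  have hfd : HasFDerivAt (fun z => u z t) (0 : X →L[ℝ] ℝ) x := by
    simpa [hgrad] using hux.hasGradientAt.hasFDerivAt
  have hline : HasDerivAt (fun s : ℝ => x + s • e) e 0 := by
    simpa using ((hasDerivAt_id (0 : ℝ)).smul_const e).const_add x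
  have d1 : HasDerivAt (fun s : ℝ => c * exp (t / 2) * u (x + s • e) t) 0 0 := by
    have := HasFDerivAt.comp_hasDerivAt_of_eq (0 : ℝ) hfd hline (by simp)
    simpa using this.const_mul (c * exp (t / 2))
  obtain ⟨hI, d2⟩ := hasDerivAt_kernelSolution hf hg hrt hfs hgs e
  have hev : (fun s : ℝ => c * exp (t / 2) * u (x + s • e) t)
      =ᶠ[𝓝 0] fun s => kernelSolution f g (x + s • e, t) := by
    have : ∀ᶠ s : ℝ in 𝓝 0, x + s • e ∈ ball x ((t - r) / 2) := by
      refine hline.continuousAt.eventually (isOpen_ball.mem_nhds ?_)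
      simpa using hrt
    filter_upwards [this] with s hs
    exact hrep f g u hf hg hu hpde hu0 hu1 x r t hr hrt hfs hgs _ hs
  have := (d2.congr_of_eventuallyEq hev).unique d1
  exact ⟨hI, by linarith⟩

end Representation

section Asymptotics

lemma KernelAsymp.exists_forall {b : ℝ} (h : KernelAsymp b) {δ : ℝ} (hδ : 0 < δ) :
    ∃ s₀ > 0, ∀ σ ≥ s₀, 0 < kernelPhi b σ ∧
      |Real.sqrt σ * kernelPhi (b - 1) σ / kernelPhi b σ - 1 / 4| < δ := by
  have h2 := Metric.tendsto_nhds.mp h.2 δ hδ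
  obtain ⟨s, hs⟩ := eventually_atTop.mp (h.1.and h2)
  refine ⟨max s 1, by positivity, fun σ hσ => ?_⟩
  exact hs σ ((le_max_left _ _).trans hσ)

lemma kernelPhi_le_two_mul {b s₀ m : ℝ} (hs : ∀ σ ≥ s₀, 0 < kernelPhi b σ ∧
      |Real.sqrt σ * kernelPhi (b - 1) σ / kernelPhi b σ - 1 / 4| < 1 / 4) (hm : 0 < m)
    (hms : s₀ ≤ m ^ 2) {σ τ : ℝ} (hσ : m ^ 2 ≤ σ) (hτ : m ^ 2 ≤ τ) (hστ : |τ - σ| ≤ m) :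
    kernelPhi b τ ≤ 2 * kernelPhi b σ := by
  have hpos : ∀ s, m ^ 2 ≤ s → 0 < kernelPhi b s := fun s h => (hs s (hms.trans h)).1
  have hd : ∀ s ∈ Ici (m ^ 2), HasDerivWithinAt (fun s => Real.log (kernelPhi b s))
      (kernelPhi (b - 1) s / kernelPhi b s) (Ici (m ^ 2)) s := fun s h =>
    ((hasDerivAt_kernelPhi_of_pos (lt_of_lt_of_le (by positivity) h)).log
      (hpos s h).ne').hasDerivWithinAt
  have hb : ∀ s ∈ Ici (m ^ 2), ‖kernelPhi (b - 1) s / kernelPhi b s‖ ≤ 1 / (2 * m) := by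
    intro s h
    have h1 := (hs s (hms.trans h)).2
    have h2 : m ≤ Real.sqrt s := Real.le_sqrt_of_sq_le h
    rw [mul_div_assoc, abs_lt] at h1
    have h3 : |Real.sqrt s * (kernelPhi (b - 1) s / kernelPhi b s)| ≤ 1 / 2 :=
      abs_le.mpr ⟨by linarith, by linarith⟩
    rw [abs_mul, abs_of_nonneg (Real.sqrt_nonneg s)] at h3
    rw [Real.norm_eq_abs, le_div_iff₀ (by positivity)]
    nlinarith [mul_le_mul_of_nonneg_right h2 (abs_nonneg (kernelPhi (b - 1) s / kernelPhi b s))]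
  have := (convex_Ici (m ^ 2)).norm_image_sub_le_of_norm_hasDerivWithin_le hd hb hσ hτ
  have hlog : Real.log (kernelPhi b τ) ≤ Real.log (2 * kernelPhi b σ) := by
    rw [Real.log_mul two_ne_zero (hpos σ hσ).ne']
    have h1 : 1 / (2 * m) * ‖τ - σ‖ ≤ 1 / 2 := by
      rw [Real.norm_eq_abs, one_div_mul_eq_div, div_le_iff₀ (by positivity)]
      linarith
    have h2 := Real.log_two_gt_d9
    have h3 := (le_abs_self _).trans this
    linarith
  exact (Real.log_le_log_iff (hpos τ hτ) (by linarith [hpos σ hσ])).mp hlog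

lemma kernelPhi_estimates (b : ℝ) {δ : ℝ} (hδ : 0 < δ) (hδ' : δ ≤ 1 / 4) :
    ∃ t₀ > 0, ∀ t ≥ t₀, ∀ ρ, ρ ^ 2 ≤ δ * t ^ 2 →
      (∀ σ ∈ Icc (t ^ 2 - ρ ^ 2) (t ^ 2), 0 < kernelPhi b σ ∧
        |2 * t * kernelPhi (b - 1) σ - kernelPhi b σ / 2| ≤ 6 * δ * kernelPhi b σ) ∧
      ∀ σ ∈ Icc (t ^ 2 - ρ ^ 2) (t ^ 2), ∀ τ ∈ Icc (t ^ 2 - ρ ^ 2) (t ^ 2), |τ - σ| ≤ t / 2 →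
        kernelPhi b τ ≤ 2 * kernelPhi b σ := by
  obtain ⟨s₀, hs₀, hs⟩ := (kernelAsymp b).exists_forall hδ
  refine ⟨2 * Real.sqrt s₀, by positivity, fun t ht ρ hρ => ?_⟩
  have ht0 : 0 < t := lt_of_lt_of_le (by positivity) ht
  have hms : s₀ ≤ (t / 2) ^ 2 := by
    have := Real.sq_sqrt hs₀.le
    have := Real.sqrt_nonneg s₀
    nlinarith
  have hle : ∀ {σ}, σ ∈ Icc (t ^ 2 - ρ ^ 2) (t ^ 2) → (t / 2) ^ 2 ≤ σ := fun h => by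
    have := h.1
    nlinarith [sq_nonneg t]
  constructor
  · intro σ hσ
    obtain ⟨hG, hq⟩ := hs σ (hms.trans (hle hσ))
    refine ⟨hG, ?_⟩
    have hσ0 : 0 < σ := lt_of_lt_of_le (by positivity) (hle hσ)
    set q := Real.sqrt σ * kernelPhi (b - 1) σ / kernelPhi b σ with hqdef
    have hsq : 0 < Real.sqrt σ := Real.sqrt_pos.mpr hσ0
    have hκ1 : 1 ≤ t / Real.sqrt σ := by
      rw [one_le_div hsq]
      exact Real.sqrt_le_iff.mpr ⟨ht0.le, hσ.2⟩
    have hκ2 : t / Real.sqrt σ ≤ 1 + 2 * δ := by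
      rw [div_le_iff₀ hsq, ← Real.sqrt_sq (show 0 ≤ 1 + 2 * δ by linarith),
        ← Real.sqrt_mul (by positivity)]
      refine Real.le_sqrt_of_sq_le ?_
      have h1 : (1 - δ) * t ^ 2 ≤ σ := by linarith [hσ.1]
      have h2 : 1 ≤ (1 + 2 * δ) ^ 2 * (1 - δ) := by nlinarith [mul_pos hδ hδ]
      calc t ^ 2 ≤ ((1 + 2 * δ) ^ 2 * (1 - δ)) * t ^ 2 := le_mul_of_one_le_left (by positivity) h2
        _ = (1 + 2 * δ) ^ 2 * ((1 - δ) * t ^ 2) := by ring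
        _ ≤ _ := by gcongr
    set κ := t / Real.sqrt σ with hκdef
    have he : 2 * t * kernelPhi (b - 1) σ - kernelPhi b σ / 2
        = (2 * κ * q - 1 / 2) * kernelPhi b σ := by
      rw [hκdef, hqdef]
      field_simp
    rw [he, abs_mul, abs_of_pos hG]
    refine mul_le_mul_of_nonneg_right ?_ hG.le
    rw [abs_lt] at hq
    rw [abs_le]
    constructor <;> nlinarith [hq.1, hq.2]
  · intro σ hσ τ hτ h
    exact kernelPhi_le_two_mul (fun s hs' => ⟨(hs s hs').1, (hs s hs').2.trans_le hδ'⟩)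
      (by positivity) hms (hle hσ) (hle hτ) h

/-- A point at distance between `a` and `b` from a convex set is separated from it along the
direction from its metric projection onto the closure. -/
lemma exists_projection {E : Type*} [NormedAddCommGroup E] [InnerProductSpace ℝ E]
    [CompleteSpace E] {K : Set E} (hconv : Convex ℝ K) (hne : K.Nonempty)
    {a b : ℝ} (ha : 0 ≤ a) (hb : 0 ≤ b) {x : E} (hx : x ∈ K + b • closedBall (0 : E) 1)
    (hx' : x ∉ K + a • closedBall (0 : E) 1) :
    ∃ p ∈ closure K, a ≤ ‖x - p‖ ∧ ‖x - p‖ ≤ b ∧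
      ∀ y ∈ K, ‖x - p‖ ^ 2 ≤ inner ℝ (x - y) (x - p) := by
  obtain ⟨p, hp, hpm⟩ := exists_norm_eq_iInf_of_complete_convex hne.closure
    isClosed_closure.isComplete hconv.closure x
  have hin := (norm_eq_iInf_iff_real_inner_le_zero hconv.closure hp).mp hpm
  refine ⟨p, hp, ?_, ?_, ?_⟩
  · refine closure_minimal (t := {y | a ≤ ‖x - y‖}) (fun y hy => ?_)
      (isClosed_le continuous_const (by fun_prop)) hp
    by_contra h
    refine hx' (Set.mem_add.mpr ⟨y, hy, x - y, ?_, by abel⟩)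
    rw [smul_unitClosedBall_of_nonneg ha]
    simpa using (not_le.mp h).le
  · rw [smul_unitClosedBall_of_nonneg hb] at hx
    obtain ⟨k, hk, w, hw, rfl⟩ := Set.mem_add.mp hx
    rw [hpm]
    refine (ciInf_le ⟨0, Set.forall_mem_range.2 fun _ => norm_nonneg _⟩
      (⟨k, subset_closure hk⟩ : closure K)).trans ?_
    simpa using hw
  · intro y hy
    have h1 := hin y (subset_closure hy)
    have h2 : x - y = (x - p) - (y - p) := by abel
    rw [h2, inner_sub_left, real_inner_self_eq_norm_sq, real_inner_comm]
    linarith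

local notation "X" => EuclideanSpace ℝ (Fin n)

lemma integral_gradientIntegrand_pos {f g : X → ℝ} {K : Set X} {R δ t ρ : ℝ}
    (hf : Continuous f) (hg : Continuous g) (hfR : tsupport f ⊆ closedBall 0 R)
    (hgR : tsupport g ⊆ closedBall 0 R) (hKR : closure K ⊆ closedBall 0 R)
    (hK : Function.support (f + g) ⊆ K) (hpos : ∀ y, 0 ≤ f y + g y) (hδ : 0 < δ)
    (hH : 12 * δ * (1 + 2 * R) * ∫ y, |f y| < (∫ y, (f y + g y)) / 2)
    (hR : 0 ≤ R) (hRρ : 4 * R * ρ ≤ t / 2)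
    (hest : ∀ σ ∈ Icc (t ^ 2 - ρ ^ 2) (t ^ 2), 0 < kernelPhi ((1 - n) / 2 - 1) σ ∧
        |2 * t * kernelPhi ((1 - n) / 2 - 1 - 1) σ - kernelPhi ((1 - n) / 2 - 1) σ / 2|
          ≤ 6 * δ * kernelPhi ((1 - n) / 2 - 1) σ)
    (hratio : ∀ σ ∈ Icc (t ^ 2 - ρ ^ 2) (t ^ 2), ∀ τ ∈ Icc (t ^ 2 - ρ ^ 2) (t ^ 2),
      |τ - σ| ≤ t / 2 →
        kernelPhi ((1 - n) / 2 - 1) τ ≤ 2 * kernelPhi ((1 - n) / 2 - 1) σ)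
    {x p : X} (hp : p ∈ closure K) (hp1 : 1 ≤ ‖x - p‖) (hpρ : ‖x - p‖ + 2 * R ≤ ρ)
    (hpK : ∀ y ∈ K, ‖x - p‖ ^ 2 ≤ inner ℝ (x - y) (x - p))
    (hI : Integrable (gradientIntegrand f g t x (x - p))) :
    0 < ∫ y, gradientIntegrand f g t x (x - p) y := by
  have hB : IsCompact (closedBall (0 : X) R) := isCompact_closedBall 0 R
  have hfI : Integrable f := hf.integrable_of_hasCompactSupport
    (hB.of_isClosed_subset (isClosed_tsupport f) hfR)
  have hgI : Integrable g := hg.integrable_of_hasCompactSupport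
    (hB.of_isClosed_subset (isClosed_tsupport g) hgR)
  set d := ‖x - p‖ with hd
  set G := kernelPhi ((1 - n) / 2 - 1) with hG
  set Gp := G (t ^ 2 - ‖x - p‖ ^ 2) with hGp
  have hnorm : ∀ y ∈ closedBall (0 : X) R, ‖x - y‖ ≤ d + 2 * R ∧ d - 2 * R ≤ ‖x - y‖ := by
    intro y hy
    have h1 := mem_closedBall_zero_iff.mp hy
    have h2 := mem_closedBall_zero_iff.mp (hKR hp)
    have h3 : ‖p - y‖ ≤ 2 * R := (norm_sub_le p y).trans (by linarith)
    have h4 : x - y = (x - p) + (p - y) := by abel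
    constructor
    · rw [h4]
      exact (norm_add_le _ _).trans (by linarith)
    · have h5 : x - p = (x - y) - (p - y) := by abel
      have := norm_sub_le (x - y) (p - y)
      rw [← h5] at this
      linarith
  have hIcc : ∀ y ∈ closedBall (0 : X) R,
      t ^ 2 - ‖x - y‖ ^ 2 ∈ Icc (t ^ 2 - ρ ^ 2) (t ^ 2) := fun y hy => by
    have h1 := (hnorm y hy).1.trans hpρ
    have h2 := norm_nonneg (x - y)
    constructor <;> nlinarith
  have hGpos : 0 < Gp := (hest _ (hIcc p (hKR hp))).1
  have hbound : ∀ y, Gp * d ^ 2 * ((f y + g y) / 2 - 12 * δ * (1 + 2 * R) * |f y|)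
      ≤ gradientIntegrand f g t x (x - p) y := by
    intro y
    by_cases hy : y ∈ closedBall (0 : X) R
    · obtain ⟨hGy, hA⟩ := hest _ (hIcc y hy)
      have hdist : |(t ^ 2 - ‖x - y‖ ^ 2) - (t ^ 2 - ‖x - p‖ ^ 2)| ≤ t / 2 := by
        obtain ⟨h1, h2⟩ := hnorm y hy
        have h3 := norm_nonneg (x - y)
        rw [← hd]
        have h4 : |d - ‖x - y‖| ≤ 2 * R := abs_le.mpr ⟨by linarith, by linarith⟩
        have h5 : (t ^ 2 - ‖x - y‖ ^ 2) - (t ^ 2 - d ^ 2)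
          = (d - ‖x - y‖) * (d + ‖x - y‖) := by ring
        rw [h5, abs_mul, abs_of_nonneg (show 0 ≤ d + ‖x - y‖ by linarith)]
        calc _ ≤ 2 * R * (2 * ρ) := by gcongr; linarith
          _ ≤ _ := by linarith
      have hr1 := hratio _ (hIcc p (hKR hp)) _ (hIcc y hy) hdist
      have hr2 := hratio _ (hIcc y hy) _ (hIcc p (hKR hp)) (by rwa [abs_sub_comm])
      have hinner : |inner ℝ (x - y) (x - p)| ≤ d ^ 2 * (1 + 2 * R) := by
        refine (abs_real_inner_le_norm _ _).trans ?_
        have := (hnorm y hy).1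
        calc ‖x - y‖ * ‖x - p‖ ≤ (d + 2 * R) * d := by gcongr
          _ ≤ _ := by nlinarith [mul_nonneg hR (by linarith : 0 ≤ d)]
      have hih : d ^ 2 * (f y + g y) ≤ inner ℝ (x - y) (x - p) * (f y + g y) := by
        by_cases h0 : (f + g) y = 0
        · have h0' : f y + g y = 0 := h0
          simp [h0']
        · exact mul_le_mul_of_nonneg_right (hpK y (hK h0)) (hpos y)
      set I := inner ℝ (x - y) (x - p)
      set Gy := kernelPhi ((1 - n) / 2 - 1) (t ^ 2 - ‖x - y‖ ^ 2) with hGydef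
      have e : gradientIntegrand f g t x (x - p) y = Gy * (I * (f y + g y))
          + I * ((2 * t * kernelPhi ((1 - n) / 2 - 1 - 1) (t ^ 2 - ‖x - y‖ ^ 2) - Gy / 2)
            * f y) := by
        rw [gradientIntegrand]
        ring
      set A := 2 * t * kernelPhi ((1 - n) / 2 - 1 - 1) (t ^ 2 - ‖x - y‖ ^ 2) - Gy / 2
      have h1 : Gp / 2 * (d ^ 2 * (f y + g y)) ≤ Gy * (I * (f y + g y)) := by
        have h0 : 0 ≤ d ^ 2 * (f y + g y) := mul_nonneg (sq_nonneg d) (hpos y)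
        calc _ ≤ Gy * (d ^ 2 * (f y + g y)) :=
              mul_le_mul_of_nonneg_right (by linarith) h0
          _ ≤ _ := mul_le_mul_of_nonneg_left hih hGy.le
      have h2 : |I * (A * f y)| ≤ d ^ 2 * (1 + 2 * R) * (6 * δ * (2 * Gp) * |f y|) := by
        rw [abs_mul, abs_mul]
        have h3 : |A| ≤ 6 * δ * (2 * Gp) := hA.trans (by gcongr)
        gcongr
      have h3 := neg_le_of_abs_le h2
      rw [e]
      linarith
    · have h1 : f y = 0 := image_eq_zero_of_notMem_tsupport fun h => hy (hfR h)
      have h2 : g y = 0 := image_eq_zero_of_notMem_tsupport fun h => hy (hgR h)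
      simp [gradientIntegrand, h1, h2]
  have hlI : Integrable fun y =>
      Gp * d ^ 2 * ((f y + g y) / 2 - 12 * δ * (1 + 2 * R) * |f y|) :=
    (((hfI.add hgI).div_const 2).sub (hfI.abs.const_mul _)).const_mul _
  refine lt_of_lt_of_le ?_ (integral_mono hlI hI hbound)
  have hhI : Integrable fun y => (f y + g y) / 2 := (hfI.add hgI).div_const 2
  rw [integral_const_mul, integral_sub hhI (hfI.abs.const_mul _), integral_const_mul,
    integral_div]
  have : 0 < d := by linarith
  exact mul_pos (by positivity) (by linarith)

end Asymptotics

/-- cf. Lemma `nocritical`. If `ψ, φ` are non-decreasing with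
`ψ(0) = φ(0) = 0`, `ψ(t) → ∞`, `ψ(t)/√t → 0`, `φ(t)/t → 0`, and `φ ≥ ψ`, then there is
`T ≥ T₀(φ)` such that for all `t ≥ T` the spatial gradient of `u(·,t)` does not vanish on
`(CS(h) + φ(t)Bⁿ) \ (CS(h) + ψ(t)Bⁿ)`, where `h = f + g`. -/
theorem no_critical_points_in_annulus (n : ℕ) (hn : 1 ≤ n)
    (f g : EuclideanSpace ℝ (Fin n) → ℝ)
    (hf : ContDiff ℝ (⊤ : ℕ∞) f) (hg : ContDiff ℝ (⊤ : ℕ∞) g)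
    (hfc : HasCompactSupport f) (hgc : HasCompactSupport g)
    (hne : f + g ≠ 0) (hpos : ∀ x, 0 ≤ f x + g x)
    (u : EuclideanSpace ℝ (Fin n) → ℝ → ℝ)
    (hreg : ContDiffOn ℝ 2 (fun p : EuclideanSpace ℝ (Fin n) × ℝ => u p.1 p.2) (univ ×ˢ Ici 0))
    (hpde : ∀ x, ∀ t > (0 : ℝ),
      deriv (deriv (fun s => u x s)) t - lap (fun z => u z t) x
        + deriv (fun s => u x s) t = 0)
    (hu0 : ∀ x, u x 0 = f x)
    (hu1 : ∀ x, derivWithin (fun s => u x s) (Ici 0) 0 = g x)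
    (ψ phi : ℝ → ℝ)
    (hψ0 : ψ 0 = 0) (hphi0 : phi 0 = 0)
    (hψmono : MonotoneOn ψ (Ici 0)) (hphimono : MonotoneOn phi (Ici 0))
    (hψnn : ∀ t ≥ (0 : ℝ), 0 ≤ ψ t) (hphinn : ∀ t ≥ (0 : ℝ), 0 ≤ phi t)
    (hψtop : Tendsto ψ atTop atTop)
    (hψo : Tendsto (fun t => ψ t / Real.sqrt t) atTop (𝓝 0))
    (hphio : Tendsto (fun t => phi t / t) atTop (𝓝 0))
    (hge : ∀ t, ψ t ≤ phi t) :
    ∃ T, T0 f g phi ≤ T ∧ ∀ t ≥ T,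
      ∀ x ∈ (CS (f + g) + phi t • closedBall (0 : EuclideanSpace ℝ (Fin n)) 1) \
          (CS (f + g) + ψ t • closedBall (0 : EuclideanSpace ℝ (Fin n)) 1),
        gradient (fun z => u z t) x ≠ 0 := by
  set h : EuclideanSpace ℝ (Fin n) → ℝ := f + g with hh
  have hfcont := hf.continuous
  have hgcont := hg.continuous
  obtain ⟨R, hR, hsub⟩ : ∃ R, 0 ≤ R ∧ tsupport f ∪ tsupport g ⊆ closedBall 0 R := by
    obtain ⟨R, hR⟩ := (hfc.isCompact.union hgc.isCompact).isBounded.subset_closedBall 0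
    exact ⟨max R 0, le_max_right _ _, hR.trans (closedBall_subset_closedBall (le_max_left _ _))⟩
  have hfR := subset_union_left.trans hsub
  have hgR := subset_union_right.trans hsub
  have hCS : closure (CS h) ⊆ closedBall 0 R := closure_minimal
    (convexHull_min ((tsupport_add f g).trans hsub) (convex_closedBall 0 R)) isClosed_closedBall
  obtain ⟨x₀, hx₀⟩ : ∃ x, h x ≠ 0 := Function.ne_iff.mp hne
  have hsuppK : Function.support h ⊆ CS h :=
    (subset_tsupport h).trans (subset_convexHull ℝ _)
  have hHpos : 0 < ∫ y, (f y + g y) :=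
    Continuous.integral_pos_of_hasCompactSupport_nonneg_nonzero (f := h)
      (hfcont.add hgcont) (hfc.add hgc) hpos hx₀
  have hFnn : 0 ≤ ∫ y, |f y| := integral_nonneg fun y => abs_nonneg _
  obtain ⟨δ, hδ, hδ', hH⟩ : ∃ δ > 0, δ ≤ 1 / 4 ∧
      12 * δ * (1 + 2 * R) * ∫ y, |f y| < (∫ y, (f y + g y)) / 2 := by
    set C := 12 * (1 + 2 * R) * ∫ y, |f y|
    have hC : 0 ≤ C := by positivity
    set H := ∫ y, (f y + g y)
    refine ⟨min (1 / 4) (H / (4 * (C + 1))), lt_min (by norm_num) (by positivity),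
      min_le_left _ _, ?_⟩
    calc _ = min (1 / 4) (H / (4 * (C + 1))) * C := by ring
      _ ≤ H / (4 * (C + 1)) * C := by gcongr; exact min_le_right _ _
      _ < H / 2 := by
        rw [div_mul_eq_mul_div, div_lt_div_iff₀ (by positivity) two_pos]
        nlinarith [mul_nonneg hHpos.le hC]
  obtain ⟨t₀, ht₀, hest⟩ := kernelPhi_estimates ((1 - n) / 2 - 1 : ℝ) hδ hδ'
  have hρ : Tendsto (fun t => (phi t + 2 * R) / t) atTop (𝓝 0) := by
    simpa [add_div] using hphio.add (tendsto_const_nhds.div_atTop tendsto_id)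
  have hη : 0 < min δ (1 / (8 * R + 8)) := by positivity
  obtain ⟨T', hT'⟩ := eventually_atTop.mp
    (((hρ.eventually_le_const hη).and (hψtop.eventually_ge_atTop 1)).and (eventually_ge_atTop t₀))
  refine ⟨max (T0 f g phi) T', le_max_left _ _, fun t ht x hx hgrad => ?_⟩
  obtain ⟨⟨hρt, hψ1⟩, htt₀⟩ := hT' t ((le_max_right _ _).trans ht)
  have ht0 : 0 < t := ht₀.trans_le htt₀
  rw [div_le_iff₀ ht0] at hρt
  set ρ := phi t + 2 * R with hρdef
  have hphi : 0 ≤ phi t := hphinn t ht0.le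
  have hρ0 : 0 ≤ ρ := by positivity
  have hρδ : ρ ≤ δ * t := hρt.trans (by gcongr; exact min_le_left _ _)
  have hρR : (8 * R + 8) * ρ ≤ t := by
    have h1 : ρ ≤ 1 / (8 * R + 8) * t := hρt.trans (by gcongr; exact min_le_right _ _)
    rw [one_div_mul_eq_div, le_div_iff₀ (by positivity)] at h1
    linarith
  obtain ⟨he1, he2⟩ := hest t htt₀ ρ (by
    calc ρ ^ 2 ≤ (δ * t) ^ 2 := by gcongr
      _ = δ * δ * t ^ 2 := by ring
      _ ≤ 1 * δ * t ^ 2 := by gcongr; linarith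
      _ = δ * t ^ 2 := by ring)
  obtain ⟨p, hp, hψp, hpφ, hpK⟩ := exists_projection (K := CS h) (convex_convexHull ℝ _)
    (⟨x₀, hsuppK hx₀⟩) (zero_le_one.trans hψ1) hphi hx.1 hx.2
  have hball : closedBall 0 R ⊆ closedBall x ρ := by
    refine closedBall_subset_closedBall' ?_
    have h1 := mem_closedBall_zero_iff.mp (hCS hp)
    have h2 : ‖x‖ ≤ ‖x - p‖ + ‖p‖ := by simpa using norm_add_le (x - p) p
    rw [dist_zero_left]
    linarith
  obtain ⟨hI, hI0⟩ := integral_gradientIntegrand_eq_zero hfcont hgcont hreg hpde hu0 hu1 hρ0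
    (by nlinarith) (hfR.trans hball) (hgR.trans hball) hgrad (x - p)
  exact (integral_gradientIntegrand_pos hfcont hgcont hfR hgR hCS hsuppK hpos hδ hH hR
    (by nlinarith) he1 he2 hp (hψ1.trans hψp) (by linarith) hpK hI).ne' hI0
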